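/- arXiv:1404.0613 — 8 statements merged into one kernel-verified Lean document; each statement's English description precedes it below -/
import Mathlib

section
/- Suppose a ≠ 0, a₁ ≠ 0, a₂ ≠ 0 and a₂² − 4a₁b = 0. Then the Chua system has exactly two equilibrium points: the origin (0,0,0) and p = (−a₂/(2a₁), −a₂b₁/(2a₁), 0). -/
/-!
At an equilibrium `z = 0` and `y = b₁ x`, so `x` is a root of `a₁ x³ + a₂ x² + b x`. Since
`a₂² = 4 a₁ b`, multiplying this cubic by `4 a₁` gives `x (2 a₁ x + a₂)²`, whose only roots are
`0` and `-a₂ / (2 a₁)`.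
-/

/-- Right-hand side of the Chua system
`ẋ = a(z − b·x − a₂·x² − a₁·x³), ẏ = −z, ż = −b₁·x + y + b₂·z`. -/
def chuaRHS (a a₁ a₂ b b₁ b₂ : ℝ) (p : ℝ × ℝ × ℝ) : ℝ × ℝ × ℝ :=
  (a * (p.2.2 - b * p.1 - a₂ * p.1 ^ 2 - a₁ * p.1 ^ 3),
   -p.2.2,
   -b₁ * p.1 + p.2.1 + b₂ * p.2.2)

/-- If `a ≠ 0`, `a₁ ≠ 0`, `a₂ ≠ 0` and `a₂² − 4a₁b = 0`, the equilibrium points of the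
Chua system are exactly the origin and `p = (−a₂/(2a₁), −a₂b₁/(2a₁), 0)`. -/
theorem chua_equilibria_of_discrim_zero (a a₁ a₂ b b₁ b₂ : ℝ)
    (ha : a ≠ 0) (ha₁ : a₁ ≠ 0) (ha₂ : a₂ ≠ 0) (hD : a₂ ^ 2 - 4 * a₁ * b = 0) :
    {p : ℝ × ℝ × ℝ | chuaRHS a a₁ a₂ b b₁ b₂ p = 0} =
      {((0 : ℝ), (0 : ℝ), (0 : ℝ)),
       (-a₂ / (2 * a₁), -(a₂ * b₁) / (2 * a₁), 0)} := by
  ext ⟨x, y, z⟩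
  simp only [chuaRHS, Set.mem_ofPred_eq, Set.mem_insert_iff, Set.mem_singleton_iff,
    Prod.mk.injEq, Prod.mk_eq_zero]
  constructor
  · rintro ⟨h1, h2, h3⟩
    obtain rfl : z = 0 := neg_eq_zero.mp h2
    have hy : y = b₁ * x := by linarith
    have hc := (mul_eq_zero.mp h1).resolve_left ha
    -- the vanishing discriminant makes the cubic `x` times a perfect square, up to `4 * a₁`
    have hsq : x * (2 * a₁ * x + a₂) ^ 2 = 0 := by
      linear_combination -4 * a₁ * hc + x * hD
    rcases mul_eq_zero.mp hsq with hx | hx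
    · left
      simp [hy, hx]
    · right
      have hx' : x = -a₂ / (2 * a₁) := by
        rw [eq_div_iff (mul_ne_zero two_ne_zero ha₁)]
        linear_combination pow_eq_zero_iff two_ne_zero |>.mp hx
      refine ⟨hx', ?_, rfl⟩
      rw [hy, hx']
      ring
  · rintro (⟨rfl, rfl, rfl⟩ | ⟨rfl, rfl, rfl⟩)
    · simp
    · have hb : b = a₂ ^ 2 / (4 * a₁) := by
        rw [eq_div_iff (mul_ne_zero four_ne_zero ha₁)]
        linear_combination -hD
      refine ⟨?_, neg_zero, by ring⟩
      rw [hb]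
      field_simp
      ring
end

section
/- Let a ≠ 0 and ω > 0. The characteristic polynomial det(λ·I − J(0,0,0)) of the Jacobian of the Chua system at the origin equals λ·(λ² + ω²) (equivalently, the origin is a zero-Hopf equilibrium with eigenvalues 0 and ±iω) if and only if b = 0, b₂ = 0 and b₁ = (ω² − 1)/a. -/
/-!
Expanding the determinant gives the characteristic polynomial
`λ³ + (ab - b₂) λ² + (1 - a b b₂ + a b₁) λ + ab`. Comparison with `λ³ + ω² λ` forces `ab = 0`, hence
`b = 0` because `a ≠ 0`, then `b₂ = 0` and `1 + a b₁ = ω²`. The converse is substitution.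
-/

open Polynomial

/-- For `a ≠ 0` and `ω > 0`, the characteristic polynomial of the Jacobian
`J(0,0,0) = [[−a·b, 0, a], [0, 0, −1], [−b₁, 1, b₂]]` of the Chua system at the origin
equals `λ·(λ² + ω²)` (i.e. the origin is a zero-Hopf equilibrium with eigenvalues
`0, ±iω`) if and only if `b = 0`, `b₂ = 0` and `b₁ = (ω² − 1)/a`. -/
theorem chua_origin_zeroHopf_iff (a a₁ a₂ b b₁ b₂ ω : ℝ) (ha : a ≠ 0) (hω : 0 < ω) :
    (!![-(a * b), 0, a; 0, 0, -1; -b₁, 1, b₂] : Matrix (Fin 3) (Fin 3) ℝ).charpoly =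
        X * (X ^ 2 + C (ω ^ 2)) ↔
      b = 0 ∧ b₂ = 0 ∧ b₁ = (ω ^ 2 - 1) / a := by
  have hchar : (!![-(a * b), 0, a; 0, 0, -1; -b₁, 1, b₂] : Matrix (Fin 3) (Fin 3) ℝ).charpoly =
      (X + C (a * b)) * (X ^ 2 - C b₂ * X + 1) + C (a * b₁) * X := by
    simp [Matrix.charpoly, Matrix.charmatrix, Matrix.det_fin_three]
    ring
  rw [hchar]
  constructor
  · intro h
    -- Three values determine the lower coefficients: `0` gives `a * b = 0`, and `±1` then
    -- separate the quadratic and linear coefficients.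
    have h0 := congrArg (eval 0) h
    have h1 := congrArg (eval 1) h
    have h2 := congrArg (eval (-1)) h
    simp only [eval_add, eval_sub, eval_mul, eval_pow, eval_X, eval_C, eval_one] at h0 h1 h2
    have hb : b = 0 := by
      have : a * b = 0 := by linarith
      exact (mul_eq_zero.mp this).resolve_left ha
    subst hb
    refine ⟨rfl, by linarith, ?_⟩
    rw [eq_div_iff ha]
    linarith
  · rintro ⟨rfl, rfl, rfl⟩
    rw [mul_div_cancel₀ _ ha]
    simp only [mul_zero, map_zero, map_sub, map_one]
    ring
end

section
/- Let a ≠ 0, a₁ ≠ 0, ω > 0 and b = a₂²/(4a₁). The characteristic polynomial det(λ·I − J(p)) of the Jacobian of the Chua system at the equilibrium p = (−a₂/(2a₁), −a₂b₁/(2a₁), 0) equals λ·(λ² + ω²) (equivalently, p is a zero-Hopf equilibrium with eigenvalues 0 and ±iω) if and only if b₂ = 0 and b₁ = (ω² − 1)/a. -/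
/-!
At `x = -a₂/(2a₁)` with `b = a₂²/(4a₁)` the `(1,1)` entry of the Jacobian vanishes, so by
`chua_charpoly` its characteristic polynomial is `X * (X² - b₂ X + (1 + a b₁))`. Cancelling `X`
and comparing coefficients with `X² + ω²` gives `b₂ = 0` and `1 + a b₁ = ω²`.
-/

open Polynomial

/-- The characteristic polynomial of the Jacobian once its `(1,1)` entry is zero. -/
theorem chua_charpoly (a b₁ b₂ : ℝ) :
    (!![0, 0, a; 0, 0, -1; -b₁, 1, b₂] : Matrix (Fin 3) (Fin 3) ℝ).charpoly =
      X * (X ^ 2 - C b₂ * X + C (1 + a * b₁)) := by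
  rw [Matrix.charpoly, Matrix.det_fin_three]
  simp
  ring

/-- Let `a ≠ 0`, `a₁ ≠ 0`, `ω > 0` and `b = a₂²/(4a₁)`. The characteristic polynomial of
the Jacobian `J(p) = [[a(−b − 2a₂x − 3a₁x²), 0, a], [0, 0, −1], [−b₁, 1, b₂]]` of the Chua
system at the equilibrium `p = (−a₂/(2a₁), −a₂b₁/(2a₁), 0)` (so `x = −a₂/(2a₁)`) equals
`λ·(λ² + ω²)` (i.e. `p` is a zero-Hopf equilibrium with eigenvalues `0, ±iω`) if and only
if `b₂ = 0` and `b₁ = (ω² − 1)/a`. -/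
theorem chua_p_zeroHopf_iff (a a₁ a₂ b b₁ b₂ ω : ℝ) (ha : a ≠ 0) (ha₁ : a₁ ≠ 0)
    (hω : 0 < ω) (hb : b = a₂ ^ 2 / (4 * a₁)) :
    (!![a * (-b - 2 * a₂ * (-a₂ / (2 * a₁)) - 3 * a₁ * (-a₂ / (2 * a₁)) ^ 2), 0, a;
        0, 0, -1;
        -b₁, 1, b₂] : Matrix (Fin 3) (Fin 3) ℝ).charpoly = X * (X ^ 2 + C (ω ^ 2)) ↔
      b₂ = 0 ∧ b₁ = (ω ^ 2 - 1) / a := by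
  have h0 : a * (-b - 2 * a₂ * (-a₂ / (2 * a₁)) - 3 * a₁ * (-a₂ / (2 * a₁)) ^ 2) = 0 := by
    subst hb
    field_simp
    ring
  rw [h0, chua_charpoly, eq_div_iff ha]
  constructor
  · intro h
    have h' := mul_left_cancel₀ X_ne_zero h
    -- Evaluation at `0` gives `1 + a * b₁ = ω ^ 2`; evaluation at `1` then gives `b₂ = 0`.
    have e0 := congrArg (eval 0) h'
    have e1 := congrArg (eval 1) h'
    simp only [eval_add, eval_sub, eval_mul, eval_pow, eval_X, eval_C] at e0 e1
    constructor <;> linarith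
  · rintro ⟨rfl, h⟩
    have h1 : 1 + a * b₁ = ω ^ 2 := by linarith
    rw [h1, C_0]
    ring
end

section
/- Suppose a₁ ≠ 0 and D := a₂² − 4a₁b ≥ 0, and let p₋ = ((−a₂−√D)/(2a₁), b₁(−a₂−√D)/(2a₁), 0). Then the characteristic polynomial of the Jacobian of the Chua system at p₋ satisfies det(λ·I − J(p₋)) = [(λ² − b₂·λ + 1)·(2a₁·λ + a·(a₂² + a₂·√D − 4a₁b)) + 2a·a₁·b₁·λ] / (2a₁). -/
/-!
Expanding the determinant gives `(λ² - b₂ λ + 1)(λ - m) + a b₁ λ`, where `m` is the upper-left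
entry of the Jacobian (`chua_charpoly_aux`). At `p₋` the relation `(√D)² = a₂² - 4 a₁ b` gives
`m = -a (a₂² + a₂ √D - 4 a₁ b) / (2 a₁)` (`chua_entry_pminus`), and clearing the factor `2 a₁`
yields the claim.
-/

open Polynomial

/-- Characteristic polynomial of a Chua Jacobian with an arbitrary upper-left entry `m`. -/
theorem chua_charpoly_aux (m a b₁ b₂ : ℝ) :
    (!![m, 0, a; 0, 0, -1; -b₁, 1, b₂] : Matrix (Fin 3) (Fin 3) ℝ).charpoly =
      (X ^ 2 - C b₂ * X + 1) * (X - C m) + C (a * b₁) * X := by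
  rw [Matrix.charpoly, Matrix.det_fin_three]
  simp [Matrix.charmatrix_apply]
  ring

/-- The upper-left Jacobian entry at `p₋`, where `s` stands for `√D`. -/
theorem chua_entry_pminus (a a₁ a₂ b s : ℝ) (ha₁ : a₁ ≠ 0)
    (hs : s ^ 2 = a₂ ^ 2 - 4 * a₁ * b) :
    a * (-b - 2 * a₂ * ((-a₂ - s) / (2 * a₁)) - 3 * a₁ * ((-a₂ - s) / (2 * a₁)) ^ 2) =
      -((2 * a₁)⁻¹ * (a * (a₂ ^ 2 + a₂ * s - 4 * a₁ * b))) := by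
  field_simp
  linear_combination (-3 * a) * hs

/-- For `a₁ ≠ 0` and `D := a₂² − 4a₁b ≥ 0`, the characteristic polynomial
`det(λI − J(p₋))` of the Jacobian
`J(x,y,z) = [[a(−b − 2a₂x − 3a₁x²), 0, a], [0, 0, −1], [−b₁, 1, b₂]]` of the Chua system
at `p₋ = ((−a₂−√D)/(2a₁), b₁(−a₂−√D)/(2a₁), 0)` equals
`[(λ² − b₂λ + 1)(2a₁λ + a(a₂² + a₂√D − 4a₁b)) + 2aa₁b₁λ]/(2a₁)`. -/
theorem chua_charpoly_pminus (a a₁ a₂ b b₁ b₂ : ℝ) (ha₁ : a₁ ≠ 0)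
    (hD : a₂ ^ 2 - 4 * a₁ * b ≥ 0) :
    (!![a * (-b - 2 * a₂ * ((-a₂ - Real.sqrt (a₂ ^ 2 - 4 * a₁ * b)) / (2 * a₁)) -
            3 * a₁ * ((-a₂ - Real.sqrt (a₂ ^ 2 - 4 * a₁ * b)) / (2 * a₁)) ^ 2), 0, a;
        0, 0, -1;
        -b₁, 1, b₂] : Matrix (Fin 3) (Fin 3) ℝ).charpoly =
      C ((2 * a₁)⁻¹) *
        ((X ^ 2 - C b₂ * X + 1) *
            (C (2 * a₁) * X +
              C (a * (a₂ ^ 2 + a₂ * Real.sqrt (a₂ ^ 2 - 4 * a₁ * b) - 4 * a₁ * b))) +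
          C (2 * a * a₁ * b₁) * X) := by
  rw [chua_entry_pminus a a₁ a₂ b _ ha₁ (Real.sq_sqrt hD), chua_charpoly_aux]
  generalize a * (a₂ ^ 2 + a₂ * Real.sqrt (a₂ ^ 2 - 4 * a₁ * b) - 4 * a₁ * b) = k
  have h1 : (C ((2 * a₁)⁻¹) * C (2 * a₁) : ℝ[X]) = 1 := by
    rw [← C_mul, inv_mul_cancel₀ (mul_ne_zero two_ne_zero ha₁), C_1]
  have h2 : (C (2 * a * a₁ * b₁) : ℝ[X]) = C (2 * a₁) * C (a * b₁) := by
    rw [← C_mul]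
    congr 1
    ring
  rw [h2, C_neg, C_mul (a := (2 * a₁)⁻¹) (b := k)]
  linear_combination (-(X ^ 2 - C b₂ * X + 1) * X - C (a * b₁) * X) * h1
end

section
/- Let ā₀, ā₁, α₂, ζ₀, ζ₂, ω be real numbers with ā₀ ≠ 0, ā₁ ≠ 0, ω ≠ 0, ω² ≠ 1 and ā₁·ζ₀ < 0. Then the set of real numbers w for which there exists r > 0 with g₁(r,w) = 0 and g₂(r,w) = 0 has at most three elements; consequently at most three limit cycles can bifurcate from the zero-Hopf equilibrium p₋ of the Chua system. -/
/-!
For `r ≠ 0` the equation `g₁ = 0` is linear in `ρ = r²ω²`: it expresses `9a₀²a₁²ρ` as a quadratic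
polynomial in `w`. Multiplying `g₂ = 0`, which is also linear in `ρ`, by `9a₀²a₁²` and substituting
leaves a cubic equation in `w` with leading coefficient `36(a₀a₁)⁴ ≠ 0`. Hence every admissible `w`
lies among the at most three roots of a fixed cubic polynomial.
-/

/-- First component `g₁(r,w)` of the second-order averaged function for the Chua system
at `p₋`, with `s = √(−ā₁ζ₀)`. -/
noncomputable def g1avg (a₀ a₁ α₂ ζ₀ ζ₂ ω r w : ℝ) : ℝ :=
  Real.pi * r / (4 * ω) *
    (4 * ζ₂ + a₀ * (ω ^ 2 - 1) / (a₁ * ω ^ 6) *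
      (4 * a₀ * a₁ * w * (α₂ + 6 * Real.sqrt (-(a₁ * ζ₀))) * ω ^ 2 +
        4 * (2 * a₁ * ζ₀ - α₂ * Real.sqrt (-(a₁ * ζ₀))) * ω ^ 4 -
        3 * a₀ ^ 2 * a₁ ^ 2 * (4 * w ^ 2 + 3 * r ^ 2 * ω ^ 2)))

/-- Second component `g₂(r,w)` of the second-order averaged function for the Chua system
at `p₋`, with `s = √(−ā₁ζ₀)`. -/
noncomputable def g2avg (a₀ a₁ α₂ ζ₀ ζ₂ ω r w : ℝ) : ℝ :=
  a₀ * Real.pi / (2 * a₁ * ω ^ 7) *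
    (4 * w * (2 * a₁ * ζ₀ - α₂ * Real.sqrt (-(a₁ * ζ₀))) * ω ^ 4 -
      2 * a₀ ^ 2 * a₁ ^ 2 * w * (2 * w ^ 2 + 3 * r ^ 2 * ω ^ 2) +
      a₀ * a₁ * (α₂ + 6 * Real.sqrt (-(a₁ * ζ₀))) * ω ^ 2 * (2 * w ^ 2 + r ^ 2 * ω ^ 2))

/-- The real zeros of a genuine cubic lie in a set of at most three elements. -/
lemma exists_finset_cubic_zeros (a b c d : ℝ) (ha : a ≠ 0) :
    ∃ S : Finset ℝ, S.card ≤ 3 ∧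
      ∀ w : ℝ, a * w ^ 3 + b * w ^ 2 + c * w + d = 0 → w ∈ S := by
  let P : Cubic ℝ := ⟨a, b, c, d⟩
  have hP : P.toPoly ≠ 0 := Cubic.ne_zero_of_a_ne_zero ha
  refine ⟨P.toPoly.roots.toFinset, ?_, fun w hw => ?_⟩
  · calc P.toPoly.roots.toFinset.card ≤ P.toPoly.roots.card := Multiset.toFinset_card_le _
      _ ≤ P.toPoly.natDegree := Polynomial.card_roots' _
      _ = 3 := Cubic.natDegree_of_a_ne_zero ha
  · rw [Multiset.mem_toFinset, Polynomial.mem_roots hP]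
    simpa [Polynomial.IsRoot, Cubic.toPoly, P] using hw

/-- If `ā₀ ≠ 0`, `ā₁ ≠ 0`, `ω ≠ 0`, `ω² ≠ 1` and `ā₁ζ₀ < 0`, then there are at most three
values of `w` for which some `r > 0` satisfies `g₁(r,w) = g₂(r,w) = 0`; consequently at
most three limit cycles can bifurcate from the zero-Hopf equilibrium `p₋`. -/
theorem averaged_second_order_at_most_three (a₀ a₁ α₂ ζ₀ ζ₂ ω : ℝ)
    (ha₀ : a₀ ≠ 0) (ha₁ : a₁ ≠ 0) (hω : ω ≠ 0) (hω1 : ω ^ 2 ≠ 1) (hζ : a₁ * ζ₀ < 0) :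
    ∃ S : Finset ℝ, S.card ≤ 3 ∧
      ∀ w : ℝ, (∃ r > 0, g1avg a₀ a₁ α₂ ζ₀ ζ₂ ω r w = 0 ∧
        g2avg a₀ a₁ α₂ ζ₀ ζ₂ ω r w = 0) → w ∈ S := by
  unfold g1avg g2avg
  generalize Real.sqrt (-(a₁ * ζ₀)) = s
  have hω' : ω ^ 2 - 1 ≠ 0 := sub_ne_zero.mpr hω1
  -- `k`, `B`, `C` abbreviate the coefficients; `D` is the contribution of `ζ₂` after `g₁ = 0`
  -- is divided by the coefficient of its second summand.
  obtain ⟨k, hk⟩ : ∃ k, k = a₀ * a₁ := ⟨_, rfl⟩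
  obtain ⟨B, hB⟩ : ∃ B, B = α₂ + 6 * s := ⟨_, rfl⟩
  obtain ⟨C, hC⟩ : ∃ C, C = 2 * a₁ * ζ₀ - α₂ * s := ⟨_, rfl⟩
  obtain ⟨D, hD⟩ : ∃ D, D = 4 * ζ₂ * a₁ * ω ^ 6 / (a₀ * (ω ^ 2 - 1)) := ⟨_, rfl⟩
  have hk0 : k ≠ 0 := hk ▸ mul_ne_zero ha₀ ha₁
  obtain ⟨S, hS, hmem⟩ := exists_finset_cubic_zeros (36 * k ^ 4) (-18 * k ^ 3 * B * ω ^ 2)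
    (12 * k ^ 2 * C * ω ^ 4 - 6 * k ^ 2 * D + 4 * k ^ 2 * B ^ 2 * ω ^ 4)
    (k * B * ω ^ 2 * (4 * C * ω ^ 4 + D)) (by positivity)
  refine ⟨S, hS, fun w ⟨r, hr, h1, h2⟩ => hmem w ?_⟩
  rw [← hB, ← hC] at h1 h2
  have h1' := (mul_eq_zero.mp h1).resolve_left (by have := Real.pi_pos; positivity)
  have h2' := (mul_eq_zero.mp h2).resolve_left (by have := Real.pi_pos; positivity)
  have e1 : D + (4 * k * w * B * ω ^ 2 + 4 * C * ω ^ 4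
      - 3 * k ^ 2 * (4 * w ^ 2 + 3 * r ^ 2 * ω ^ 2)) = 0 := by
    rw [hD, hk]
    field_simp at h1' ⊢
    linear_combination h1'
  have e2 : 4 * w * C * ω ^ 4 - 2 * k ^ 2 * w * (2 * w ^ 2 + 3 * r ^ 2 * ω ^ 2)
      + k * B * ω ^ 2 * (2 * w ^ 2 + r ^ 2 * ω ^ 2) = 0 := by
    rw [hk]
    linear_combination h2'
  linear_combination 9 * k ^ 2 * e2 + (k * B * ω ^ 2 - 6 * k ^ 2 * w) * e1
end

section
/- There exist real numbers ā₀, ā₁, ζ₀, ζ₂, ω with ā₀ ≠ 0, ā₁ ≠ 0, ω ≠ 0, ω² ≠ 1 and ā₁·ζ₀ < 0 such that, taking α₂ = −6√(−ā₁ζ₀), the system of equations g₁(r,w) = 0, g₂(r,w) = 0 has at least three distinct solutions (r,w) ∈ ℝ² with r > 0 (one of them having w = 0 and the other two having opposite nonzero values of w). -/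
/-- There are parameter values `ā₀ ≠ 0`, `ā₁ ≠ 0`, `ω ≠ 0`, `ω² ≠ 1`, `ā₁ζ₀ < 0` such
that, taking `α₂ = −6√(−ā₁ζ₀)`, the system `g₁(r,w) = g₂(r,w) = 0` has at least three
distinct solutions with `r > 0`: one with `w = 0` and two with opposite nonzero values
of `w`. -/
theorem averaged_second_order_three_solutions :
    ∃ a₀ a₁ ζ₀ ζ₂ ω : ℝ, a₀ ≠ 0 ∧ a₁ ≠ 0 ∧ ω ≠ 0 ∧ ω ^ 2 ≠ 1 ∧ a₁ * ζ₀ < 0 ∧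
      ∃ r₀ r w : ℝ, 0 < r₀ ∧ 0 < r ∧ w ≠ 0 ∧
        g1avg a₀ a₁ (-6 * Real.sqrt (-(a₁ * ζ₀))) ζ₀ ζ₂ ω r₀ 0 = 0 ∧
        g2avg a₀ a₁ (-6 * Real.sqrt (-(a₁ * ζ₀))) ζ₀ ζ₂ ω r₀ 0 = 0 ∧
        g1avg a₀ a₁ (-6 * Real.sqrt (-(a₁ * ζ₀))) ζ₀ ζ₂ ω r w = 0 ∧
        g2avg a₀ a₁ (-6 * Real.sqrt (-(a₁ * ζ₀))) ζ₀ ζ₂ ω r w = 0 ∧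
        g1avg a₀ a₁ (-6 * Real.sqrt (-(a₁ * ζ₀))) ζ₀ ζ₂ ω r (-w) = 0 ∧
        g2avg a₀ a₁ (-6 * Real.sqrt (-(a₁ * ζ₀))) ζ₀ ζ₂ ω r (-w) = 0 := by
  have hs : Real.sqrt (-(1 * (-15 / 64 : ℝ))) ^ 2 = 15 / 64 := by
    rw [Real.sq_sqrt (by norm_num)]
    norm_num
  refine ⟨1, 1, -15 / 64, 63 / 64, 2, by norm_num, by norm_num, by norm_num, by norm_num,
    by norm_num, 2, 1, 3, by norm_num, by norm_num, by norm_num, ?_⟩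
  unfold g1avg g2avg
  -- The value of `s` is irrational; only `s ^ 2` enters.
  generalize Real.sqrt (-(1 * (-15 / 64 : ℝ))) = s at hs ⊢
  refine ⟨?_, ?_, ?_, ?_, ?_, ?_⟩
  · linear_combination (9 * Real.pi / 2) * hs
  · ring
  · linear_combination (9 * Real.pi / 4) * hs
  · linear_combination (9 * Real.pi / 2) * hs
  · linear_combination (9 * Real.pi / 4) * hs
  · linear_combination (-9 * Real.pi / 2) * hs
end

section
/- (First-order averaging.) Let Ω ⊆ ℝⁿ be open, T > 0, ε₀ > 0, and let f : ℝ × Ω → ℝⁿ and g : ℝ × Ω × (0, ε₀] → ℝⁿ be T-periodic in the first variable, with f twice continuously differentiable in x and g continuously differentiable in x, and f, ∂f/∂x, ∂²f/∂x², g, ∂g/∂x continuous and bounded uniformly in ε. Define the averaged function f⁰(y) = (1/T)·∫₀ᵀ f(t,y) dt. Suppose p ∈ Ω satisfies f⁰(p) = 0 and det( (∂f⁰/∂y)(p) ) ≠ 0. Then there exists ε₁ ∈ (0, ε₀] such that for every ε ∈ (0, ε₁) the differential equation ẋ = ε·f(t,x) + ε²·g(t,x,ε) has a T-periodic solution φ(·,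 ε), and φ(0, ε) → p as ε → 0. -/
/-!
The proof is a fixed point argument for a scaled displacement map. Let `x a` be the solution on
`[0, T]` with `x a 0 = a` (`exists_solution_family`). Then
`(x a T - a) / (ε T) = f0 a + J a`, where
`J a = (1 / T) ∫₀ᵀ (f s (x a s) - f s a + ε g s (x a s)) ds`.
Solutions deviate from their initial value by `O(ε)`, and this deviation is `O(ε)`-Lipschitz in `a`
by Grönwall. Since the second derivative of `f` is bounded, second differences of `f` are controlled
(`norm_second_difference_le`), and so `J` is `O(ε)` and `O(ε)`-Lipschitz.

The second difference bound passes to the average `f0` by integration. It upgrades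
differentiability of `f0` at `p` to strict differentiability (`exists_norm_sub_sub_le`), so no
differentiation under the integral sign is needed. With `A` the derivative of `f0` at `p`, the map
`a ↦ a - A⁻¹ (f0 a + J a)` is therefore a `1/2`-contraction of a small closed ball around `p`, and
it moves `p` by `O(ε)`. Its fixed point is at distance `O(ε)` from `p` and is the initial value of a
solution with `x a T = a` (`exists_closed_solution`), which extends periodically to `ℝ`
(`exists_periodic_extension`).
-/

open Set Metric MeasureTheory
open scoped NNReal

/-! ### Second differences -/

/-- If `‖D2h‖ ≤ C` on a ball, then the increments `h (x + u) - h x` are `C * ‖u‖`-Lipschitz in `x`,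
by the mean value inequality applied first to `Dh` and then to `x ↦ h (x + u) - h x`. -/
lemma norm_second_difference_le {E : Type*} [NormedAddCommGroup E] [NormedSpace ℝ E]
    {h : E → E} {Dh : E → E →L[ℝ] E} {D2h : E → E →L[ℝ] E →L[ℝ] E} {p : E} {ρ C : ℝ}
    (hd : ∀ x ∈ closedBall p ρ, HasFDerivAt h (Dh x) x)
    (hdd : ∀ x ∈ closedBall p ρ, HasFDerivAt Dh (D2h x) x)
    (hb : ∀ x ∈ closedBall p ρ, ‖D2h x‖ ≤ C)
    {a b u : E} (ha : a ∈ closedBall p ρ) (hb' : b ∈ closedBall p ρ)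
    (hau : a + u ∈ closedBall p ρ) (hbu : b + u ∈ closedBall p ρ) :
    ‖h (a + u) - h (b + u) - (h a - h b)‖ ≤ C * ‖u‖ * ‖a - b‖ := by
  have hcB : Convex ℝ (closedBall p ρ) := convex_closedBall p ρ
  have hcs : Convex ℝ (closedBall p ρ ∩ (fun x => x + u) ⁻¹' closedBall p ρ) := by
    refine hcB.inter ?_
    have := hcB.translate_preimage_right u
    simpa [add_comm] using this
  have key := hcs.norm_image_sub_le_of_norm_hasFDerivWithin_le (𝕜 := ℝ)
    (f := fun x => h (x + u) - h x) (f' := fun x => Dh (x + u) - Dh x) (C := C * ‖u‖)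
    (x := b) (y := a) ?_ ?_ ⟨hb', hbu⟩ ⟨ha, hau⟩
  · have e : h (a + u) - h (b + u) - (h a - h b) = h (a + u) - h a - (h (b + u) - h b) := by abel
    rw [e]; exact key
  · rintro x ⟨hx, hxu⟩
    have h1 : HasFDerivAt (fun x => h (x + u)) (Dh (x + u)) x :=
      hasFDerivAt_comp_add_right u |>.2 (hd (x + u) hxu)
    exact (h1.sub (hd x hx)).hasFDerivWithinAt
  · rintro x ⟨hx, hxu⟩
    have := hcB.norm_image_sub_le_of_norm_hasFDerivWithin_le (𝕜 := ℝ) (f := Dh) (f' := D2h)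
      (fun x hx => (hdd x hx).hasFDerivWithinAt) hb hx hxu
    simpa using this

/-! ### Solutions on one period and their periodic extension -/

/-- Picard–Lindelöf on `[0, T]` for all initial values in a smaller ball, with the information that
the solutions stay in the big ball and satisfy the integral equation. -/
lemma exists_solution_family {E : Type*} [NormedAddCommGroup E] [NormedSpace ℝ E] [CompleteSpace E]
    {F : ℝ → E → E} {p : E} {ρ r T M : ℝ} (hT : 0 ≤ T) (hρ : 0 ≤ ρ) (hr : 0 ≤ r) (hM : 0 ≤ M)
    (hlip : ∀ t, ∀ x ∈ closedBall p ρ, ∀ y ∈ closedBall p ρ, ‖F t x - F t y‖ ≤ M * ‖x - y‖)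
    (hcont : ContinuousOn (fun q : ℝ × E => F q.1 q.2) (univ ×ˢ closedBall p ρ))
    (hbd : ∀ t, ∀ x ∈ closedBall p ρ, ‖F t x‖ ≤ M)
    (hMT : M * T ≤ ρ - r) :
    ∃ x : E → ℝ → E, ∀ a ∈ closedBall p r, x a 0 = a ∧
      (∀ t ∈ Icc 0 T, x a t ∈ closedBall p ρ) ∧
      (∀ t ∈ Icc 0 T, HasDerivWithinAt (x a) (F t (x a t)) (Icc 0 T) t) ∧
      (∀ t ∈ Icc 0 T, x a t - a = ∫ s in (0 : ℝ)..t, F s (x a s)) := by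
  lift ρ to ℝ≥0 using hρ
  lift r to ℝ≥0 using hr
  lift M to ℝ≥0 using hM
  have h0 : (0 : ℝ) ∈ Icc 0 T := ⟨le_rfl, hT⟩
  have hcont' : ContinuousOn (Function.uncurry F) (Icc 0 T ×ˢ closedBall p ρ) :=
    hcont.mono (prod_mono (subset_univ _) subset_rfl)
  have hPL : IsPicardLindelof F (⟨0, h0⟩ : Icc 0 T) p ρ r M M := by
    refine ⟨fun t _ => ?_, fun x hx => ?_, fun t _ x hx => hbd t x hx, ?_⟩
    · refine lipschitzOnWith_iff_norm_sub_le.2 ?_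
      intro x hx y hy
      exact hlip t x hx y hy
    · exact hcont.comp (f := fun t : ℝ => (t, x)) (by fun_prop) (fun t _ => ⟨mem_univ _, hx⟩)
    · simpa [hT] using hMT
  have hex : ∀ a : E, ∃ y : ℝ → E, a ∈ closedBall p r → y 0 = a ∧
      (∀ t ∈ Icc 0 T, y t ∈ closedBall p ρ) ∧
      (∀ t ∈ Icc 0 T, HasDerivWithinAt y (F t (y t)) (Icc 0 T) t) ∧
      (∀ t ∈ Icc 0 T, y t - a = ∫ s in (0 : ℝ)..t, F s (y s)) := by
    intro a
    by_cases ha : a ∈ closedBall p r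
    swap
    · exact ⟨0, fun h => absurd h ha⟩
    obtain ⟨α, hα⟩ := ODE.FunSpace.exists_isFixedPt_next hPL (x := a) ha
    have hfix := (ODE.FunSpace.isFixedPt_next_iff hPL ha).1 hα
    have hp : ∀ t ∈ Icc 0 T, α.compProj t = ODE.picard F 0 a α.compProj t := fun t ht => by
      rw [ODE.FunSpace.compProj_of_mem ht]; exact hfix ⟨t, ht⟩
    have hmem : ∀ t ∈ Icc 0 T, α.compProj t ∈ closedBall p ρ := fun t _ =>
      α.compProj_mem_closedBall hPL.mul_max_le
    refine ⟨α.compProj, fun _ => ⟨?_, hmem, fun t ht => ?_, fun t ht => ?_⟩⟩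
    · rw [hp 0 h0, ODE.picard_apply₀]
    · exact (ODE.hasDerivWithinAt_picard_Icc h0 hcont' α.continuous_compProj.continuousOn hmem a
        ht).congr_of_mem hp ht
    · rw [hp t ht, ODE.picard_apply]
      simp
  choose x hx using hex
  exact ⟨x, hx⟩

/-- A solution on `[0, T]` of a `T`-periodic equation with equal end values extends to a
`T`-periodic solution on `ℝ`: at each time both one-sided derivatives are those of a translate. -/
lemma exists_periodic_extension {E : Type*} [NormedAddCommGroup E] [NormedSpace ℝ E]
    {F : ℝ → E → E} {T : ℝ} (hT : 0 < T) (hper : ∀ t x, F (t + T) x = F t x) {x : ℝ → E}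
    (hx : ∀ t ∈ Icc 0 T, HasDerivWithinAt x (F t (x t)) (Icc 0 T) t) (hend : x T = x 0) :
    ∃ φ : ℝ → E, φ 0 = x 0 ∧ (∀ t, ∃ s ∈ Icc 0 T, φ t = x s) ∧
      (∀ t, HasDerivAt φ (F t (φ t)) t) ∧ ∀ t, φ (t + T) = φ t := by
  have hperz : ∀ (k : ℤ) t y, F (t - k • T) y = F t y := by
    intro k t y
    have hp : Function.Periodic (fun t => F t y) T := fun t => hper t y
    exact hp.sub_zsmul_eq k
  set φ : ℝ → E := fun t => x (toIcoMod hT 0 t) with hφ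
  have hmod : ∀ t, toIcoMod hT 0 t ∈ Ico 0 T := fun t => by
    simpa using toIcoMod_mem_Ico hT 0 t
  have hloc : ∀ (k : ℤ) t, t - k • T ∈ Icc 0 T → φ t = x (t - k • T) := by
    intro k t ht
    rcases ht.2.lt_or_eq with hlt | heq
    · have : toIcoMod hT 0 t = t - k • T :=
        (toIcoMod_eq_iff hT).2 ⟨⟨ht.1, by simpa using hlt⟩, k, by abel⟩
      simp only [hφ, this]
    · have : toIcoMod hT 0 t = 0 :=
        (toIcoMod_eq_iff hT).2 ⟨⟨le_rfl, by simpa using hT⟩, k + 1, by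
          rw [add_smul, one_smul]; linarith⟩
      simp only [hφ, this, heq, hend]
  have hder : ∀ (k : ℤ) t, t - k • T ∈ Icc 0 T →
      HasDerivWithinAt φ (F t (φ t)) ((fun t => t - k • T) ⁻¹' Icc 0 T) t := by
    intro k t ht
    have h1 : HasDerivWithinAt (fun t => x (t - k • T)) (F (t - k • T) (x (t - k • T)))
        ((fun t => t - k • T) ⁻¹' Icc 0 T) t := by
      have := (hx _ ht).scomp t ((hasDerivAt_id t).sub_const (k • T)).hasDerivWithinAt
        (mapsTo_preimage (fun t => t - k • T) (Icc 0 T))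
      simpa [Function.comp_def] using this
    rw [hperz, ← hloc k t ht] at h1
    exact h1.congr_of_mem (fun s hs => hloc k s hs) ht
  refine ⟨φ, ?_, fun t => ⟨_, Ico_subset_Icc_self (hmod t), rfl⟩, fun t => ?_, fun t => ?_⟩
  · have := hloc 0 0 (by simp [hT.le])
    simpa using this
  · have hR : HasDerivWithinAt φ (F t (φ t)) (Ici t) t := by
      have hm : t - toIcoDiv hT 0 t • T ∈ Ico 0 T := hmod t
      refine (hder _ t (Ico_subset_Icc_self hm)).mono_of_mem_nhdsWithin ?_
      refine Filter.mem_of_superset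
        (Icc_mem_nhdsGE (show t < toIcoDiv hT 0 t • T + T by linarith [hm.2])) ?_
      intro s hs
      exact ⟨by linarith [hs.1, hm.1], by linarith [hs.2]⟩
    have hL : HasDerivWithinAt φ (F t (φ t)) (Iic t) t := by
      have hm : t - toIocDiv hT 0 t • T ∈ Ioc 0 T := by
        simpa using sub_toIocDiv_zsmul_mem_Ioc hT 0 t
      refine (hder _ t (Ioc_subset_Icc_self hm)).mono_of_mem_nhdsWithin ?_
      refine Filter.mem_of_superset
        (Icc_mem_nhdsLE (show toIocDiv hT 0 t • T < t by linarith [hm.1])) ?_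
      intro s hs
      exact ⟨by linarith [hs.1], by linarith [hs.2, hm.2]⟩
    have := hL.union hR
    rwa [Iic_union_Ici, hasDerivWithinAt_univ] at this
  · simp only [hφ, toIcoMod_add_right]

/-! ### The contraction argument -/

/-- Differentiability at `p` together with the second difference bound gives strict
differentiability at `p`, in the quantitative form used for the contraction estimate. -/
lemma exists_norm_sub_sub_le {E : Type*} [NormedAddCommGroup E] [NormedSpace ℝ E]
    {f0 : E → E} {A : E →L[ℝ] E} {p : E} {ρ C θ : ℝ} (hρ : 0 < ρ) (hC : 0 ≤ C) (hθ : 0 < θ)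
    (hA : HasFDerivAt f0 A p)
    (hsd : ∀ a b u : E, a ∈ closedBall p ρ → b ∈ closedBall p ρ → a + u ∈ closedBall p ρ →
      b + u ∈ closedBall p ρ → ‖f0 (a + u) - f0 (b + u) - (f0 a - f0 b)‖ ≤ C * ‖u‖ * ‖a - b‖) :
    ∃ r, 0 < r ∧ r ≤ ρ / 2 ∧ ∀ a ∈ closedBall p r, ∀ b ∈ closedBall p r,
      ‖f0 a - f0 b - A (a - b)‖ ≤ θ * ‖a - b‖ := by
  have h1 := (hasFDerivAt_iff_isLittleO_nhds_zero.1 hA).def (half_pos hθ)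
  obtain ⟨δ, hδ, hδ'⟩ := Metric.eventually_nhds_iff.1 h1
  have hC1 : 0 < C + 1 := by linarith
  refine ⟨min (ρ / 2) (min (δ / 4) (θ / (2 * (C + 1)))), by positivity, min_le_left _ _, ?_⟩
  intro a ha b hb
  rw [mem_closedBall, dist_eq_norm, le_min_iff, le_min_iff] at ha hb
  obtain ⟨ha1, ha2, ha3⟩ := ha
  obtain ⟨hb1, hb2, hb3⟩ := hb
  have hab : ‖a - b‖ ≤ ‖a - p‖ + ‖b - p‖ := by
    rw [← sub_sub_sub_cancel_right a b p]; exact norm_sub_le _ _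
  have e1 : p + (a - b) + (b - p) = a := by abel
  have e2 : p + (b - p) = b := by abel
  have h2 := hsd (p + (a - b)) p (b - p) (by simp [dist_eq_norm]; linarith)
    (by simp [hρ.le]) (by rw [e1, mem_closedBall, dist_eq_norm]; linarith)
    (by rw [e2, mem_closedBall, dist_eq_norm]; linarith)
  rw [e1, e2, add_sub_cancel_left] at h2
  have h3 := hδ' (y := a - b) (by rw [dist_zero_right]; linarith)
  have h4 : C * ‖b - p‖ ≤ θ / 2 := by
    calc C * ‖b - p‖ ≤ (C + 1) * (θ / (2 * (C + 1))) := by gcongr; linarith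
      _ = θ / 2 := by field_simp
  calc ‖f0 a - f0 b - A (a - b)‖
      = ‖(f0 a - f0 b - (f0 (p + (a - b)) - f0 p)) +
          (f0 (p + (a - b)) - f0 p - A (a - b))‖ := by congr 1; abel
    _ ≤ C * ‖b - p‖ * ‖a - b‖ + θ / 2 * ‖a - b‖ := (norm_add_le _ _).trans (add_le_add h2 h3)
    _ ≤ θ / 2 * ‖a - b‖ + θ / 2 * ‖a - b‖ := by gcongr
    _ = θ * ‖a - b‖ := by ring

/-- The averaging argument for one value of `ε`. With `x a` the solution starting at `a`, a solution
with `x a T = a` is a fixed point of `a ↦ a - A⁻¹ ((x a T - a) / (ε T))`. The quotient is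
`f0 a + J a`, where the remainder `J` is small and Lipschitz with a small constant, both of order
`ε`, so that this map is a contraction of a small ball around `p`. -/
lemma exists_closed_solution {E : Type*} [NormedAddCommGroup E] [NormedSpace ℝ E] [CompleteSpace E]
    {f g : ℝ → E → E} {f0 : E → E} {A : E ≃L[ℝ] E} {p : E} {ρ r T C N θ ε : ℝ}
    (hT : 0 < T) (hC : 0 ≤ C) (hr : 0 < r) (hrρ : r ≤ ρ / 2) (hε : 0 < ε) (hε1 : ε ≤ 1)
    (hfc : ContinuousOn (fun q : ℝ × E => f q.1 q.2) (univ ×ˢ closedBall p ρ))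
    (hgc : ContinuousOn (fun q : ℝ × E => g q.1 q.2) (univ ×ˢ closedBall p ρ))
    (hfb : ∀ t, ∀ x ∈ closedBall p ρ, ‖f t x‖ ≤ C)
    (hgb : ∀ t, ∀ x ∈ closedBall p ρ, ‖g t x‖ ≤ C)
    (hfl : ∀ t, ∀ x ∈ closedBall p ρ, ∀ y ∈ closedBall p ρ, ‖f t x - f t y‖ ≤ C * ‖x - y‖)
    (hgl : ∀ t, ∀ x ∈ closedBall p ρ, ∀ y ∈ closedBall p ρ, ‖g t x - g t y‖ ≤ C * ‖x - y‖)
    (hfs : ∀ t, ∀ a b u : E, a ∈ closedBall p ρ → b ∈ closedBall p ρ → a + u ∈ closedBall p ρ →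
      b + u ∈ closedBall p ρ →
      ‖f t (a + u) - f t (b + u) - (f t a - f t b)‖ ≤ C * ‖u‖ * ‖a - b‖)
    (hf0 : ∀ y, f0 y = (1 / T) • ∫ t in (0 : ℝ)..T, f t y) (hp0 : f0 p = 0)
    (hN : ‖(A.symm : E →L[ℝ] E)‖ ≤ N)
    (hA : ∀ a ∈ closedBall p r, ∀ b ∈ closedBall p r,
      ‖f0 a - f0 b - A (a - b)‖ ≤ θ * ‖a - b‖)
    (h1 : 2 * ε * C * T ≤ ρ / 2) (h2 : 2 * ε * C * T ≤ 1)
    (h3 : N * (θ + ε * (8 * C ^ 2 * T + 3 * C)) ≤ 1 / 2)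
    (h4 : N * (ε * (2 * C ^ 2 * T + C)) ≤ r / 2) :
    ∃ x : ℝ → E, x T = x 0 ∧ (∀ t ∈ Icc 0 T, x t ∈ closedBall p ρ) ∧
      (∀ t ∈ Icc 0 T, HasDerivWithinAt x (ε • f t (x t) + ε ^ 2 • g t (x t)) (Icc 0 T) t) ∧
      ‖x 0 - p‖ ≤ 2 * (N * (ε * (2 * C ^ 2 * T + C))) := by
  have hN0 : 0 ≤ N := (norm_nonneg _).trans hN
  have hρ : 0 < ρ := by linarith
  have hεε : ε ^ 2 ≤ ε := by nlinarith
  have hsub : closedBall p r ⊆ closedBall p ρ := closedBall_subset_closedBall (by linarith)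
  have hFl : ∀ t, ∀ x ∈ closedBall p ρ, ∀ y ∈ closedBall p ρ,
      ‖ε • f t x + ε ^ 2 • g t x - (ε • f t y + ε ^ 2 • g t y)‖ ≤ 2 * ε * C * ‖x - y‖ := by
    intro t x hx y hy
    calc ‖ε • f t x + ε ^ 2 • g t x - (ε • f t y + ε ^ 2 • g t y)‖
        = ‖ε • (f t x - f t y) + ε ^ 2 • (g t x - g t y)‖ := by
          congr 1; rw [smul_sub, smul_sub]; abel
      _ ≤ ε * (C * ‖x - y‖) + ε * (C * ‖x - y‖) := by
          refine norm_add_le_of_le ?_ ?_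
          · rw [norm_smul, Real.norm_of_nonneg hε.le]
            gcongr; exact hfl t x hx y hy
          · rw [norm_smul, Real.norm_of_nonneg (by positivity)]
            gcongr; exact hgl t x hx y hy
      _ = 2 * ε * C * ‖x - y‖ := by ring
  have hFb : ∀ t, ∀ x ∈ closedBall p ρ, ‖ε • f t x + ε ^ 2 • g t x‖ ≤ 2 * ε * C := by
    intro t x hx
    calc ‖ε • f t x + ε ^ 2 • g t x‖ ≤ ε * C + ε * C := by
          refine norm_add_le_of_le ?_ ?_
          · rw [norm_smul, Real.norm_of_nonneg hε.le]
            gcongr; exact hfb t x hx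
          · rw [norm_smul, Real.norm_of_nonneg (by positivity)]
            gcongr; exact hgb t x hx
      _ = 2 * ε * C := by ring
  have hM0 : 0 ≤ 2 * ε * C := by positivity
  obtain ⟨x, hx⟩ := exists_solution_family (F := fun t x => ε • f t x + ε ^ 2 • g t x)
    (p := p) (ρ := ρ) (r := r) (T := T) (M := 2 * ε * C) hT.le hρ.le hr.le hM0 hFl
    ((hfc.const_smul ε).add (hgc.const_smul (ε ^ 2))) hFb (by linarith)
  have hdev : ∀ a ∈ closedBall p r, ∀ t ∈ Icc 0 T, ‖x a t - a‖ ≤ 2 * ε * C * T := by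
    intro a ha t ht
    obtain ⟨hx0, hmem, hder, -⟩ := hx a ha
    have := norm_image_sub_le_of_norm_deriv_le_segment' hder
      (fun s hs => hFb s _ (hmem s (Ico_subset_Icc_self hs))) t ht
    rw [hx0] at this
    refine this.trans ?_
    have := ht.2
    gcongr; linarith
  -- Grönwall: `exp (2 ε C T) ≤ e ≤ 3`.
  have hgron : ∀ a ∈ closedBall p r, ∀ b ∈ closedBall p r, ∀ t ∈ Icc 0 T,
      ‖x a t - x b t‖ ≤ 3 * ‖a - b‖ := by
    intro a ha b hb t ht
    obtain ⟨hx0, hmem, hder, -⟩ := hx a ha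
    obtain ⟨hx0', hmem', hder', -⟩ := hx b hb
    have key := dist_le_of_trajectories_ODE_of_mem (K := ⟨2 * ε * C, hM0⟩) (δ := ‖a - b‖)
      (v := fun t x => ε • f t x + ε ^ 2 • g t x) (s := fun _ => closedBall p ρ)
      (f := x a) (g := x b) (a := 0) (b := T)
      (fun t _ => lipschitzOnWith_iff_norm_sub_le.2 fun y hy z hz => hFl t y hy z hz)
      (fun s hs => (hder s hs).continuousWithinAt)
      (fun s hs => (hder s (Ico_subset_Icc_self hs)).mono_of_mem_nhdsWithin
        (Icc_mem_nhdsGE_of_mem hs))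
      (fun s hs => hmem s (Ico_subset_Icc_self hs))
      (fun s hs => (hder' s hs).continuousWithinAt)
      (fun s hs => (hder' s (Ico_subset_Icc_self hs)).mono_of_mem_nhdsWithin
        (Icc_mem_nhdsGE_of_mem hs))
      (fun s hs => hmem' s (Ico_subset_Icc_self hs))
      (by rw [hx0, hx0', dist_eq_norm]) t ht
    rw [dist_eq_norm] at key
    refine key.trans ?_
    rw [mul_comm]
    gcongr
    have hexp : Real.exp (2 * ε * C * (t - 0)) ≤ Real.exp 1 := by
      apply Real.exp_le_exp.2
      have : 2 * ε * C * (t - 0) ≤ 2 * ε * C * T := by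
        gcongr; linarith [ht.2]
      linarith
    exact hexp.trans (by linarith [Real.exp_one_lt_d9])
  have hdev2 : ∀ a ∈ closedBall p r, ∀ b ∈ closedBall p r, ∀ t ∈ Icc 0 T,
      ‖(x a t - a) - (x b t - b)‖ ≤ 6 * ε * C * T * ‖a - b‖ := by
    intro a ha b hb t ht
    obtain ⟨hx0, hmem, hder, -⟩ := hx a ha
    obtain ⟨hx0', hmem', hder', -⟩ := hx b hb
    have key := norm_image_sub_le_of_norm_deriv_le_segment' (C := 2 * ε * C * (3 * ‖a - b‖))
      (fun s hs => (hder s hs).sub (hder' s hs))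
      (fun s hs => (hFl s _ (hmem s (Ico_subset_Icc_self hs)) _
        (hmem' s (Ico_subset_Icc_self hs))).trans
          (mul_le_mul_of_nonneg_left (hgron a ha b hb s (Ico_subset_Icc_self hs)) hM0)) t ht
    simp only [Pi.sub_apply, hx0, hx0'] at key
    have e : (x a t - a) - (x b t - b) = x a t - x b t - (a - b) := by abel
    rw [e]
    refine key.trans ?_
    calc 2 * ε * C * (3 * ‖a - b‖) * (t - 0) ≤ 2 * ε * C * (3 * ‖a - b‖) * T := by
          gcongr; linarith [ht.2]
      _ = 6 * ε * C * T * ‖a - b‖ := by ring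
  have hcurve : ∀ (k : ℝ → E → E),
      ContinuousOn (fun q : ℝ × E => k q.1 q.2) (univ ×ˢ closedBall p ρ) →
      ∀ y : ℝ → E, ContinuousOn y (Icc 0 T) → (∀ t ∈ Icc 0 T, y t ∈ closedBall p ρ) →
      IntervalIntegrable (fun s => k s (y s)) volume 0 T := by
    intro k hk y hy hmem
    apply ContinuousOn.intervalIntegrable
    rw [uIcc_of_le hT.le]
    exact hk.comp (f := fun t : ℝ => (t, y t)) (continuousOn_id.prodMk hy)
      (fun t ht => ⟨mem_univ _, hmem t ht⟩)
  have hxc : ∀ a ∈ closedBall p r, ContinuousOn (x a) (Icc 0 T) := fun a ha t ht =>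
    ((hx a ha).2.2.1 t ht).continuousWithinAt
  have hif : ∀ a ∈ closedBall p r, IntervalIntegrable (fun s => f s (x a s)) volume 0 T :=
    fun a ha => hcurve f hfc (x a) (hxc a ha) (hx a ha).2.1
  have hig : ∀ a ∈ closedBall p r, IntervalIntegrable (fun s => g s (x a s)) volume 0 T :=
    fun a ha => hcurve g hgc (x a) (hxc a ha) (hx a ha).2.1
  have hif' : ∀ a ∈ closedBall p r, IntervalIntegrable (fun s => f s a) volume 0 T :=
    fun a ha => hcurve f hfc (fun _ => a) continuousOn_const (fun _ _ => hsub ha)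
  -- `J` is the difference between the scaled displacement and the averaged field.
  let j : E → ℝ → E := fun a s => f s (x a s) - f s a + ε • g s (x a s)
  let J : E → E := fun a => (1 / T) • ∫ s in (0 : ℝ)..T, j a s
  have hij : ∀ a ∈ closedBall p r, IntervalIntegrable (j a) volume 0 T := fun a ha =>
    ((hif a ha).sub (hif' a ha)).add ((hig a ha).smul ε)
  have hdisp : ∀ a ∈ closedBall p r, x a T - a = (ε * T) • (f0 a + J a) := by
    intro a ha
    rw [(hx a ha).2.2.2 T ⟨hT.le, le_rfl⟩, hf0 a, ← smul_add,
      ← intervalIntegral.integral_add (hif' a ha) (hij a ha), smul_smul,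
      show ε * T * (1 / T) = ε by field_simp, ← intervalIntegral.integral_smul]
    congr 1
    ext s
    simp only [j, smul_add, smul_sub, smul_smul, pow_two]
    abel
  have hTT : ∀ (k : ℝ → E) (c : ℝ), (∀ s ∈ Icc 0 T, ‖k s‖ ≤ c) →
      ‖(1 / T) • ∫ s in (0 : ℝ)..T, k s‖ ≤ c := by
    intro k c hk
    have := intervalIntegral.norm_integral_le_of_norm_le_const (a := 0) (b := T) (f := k) (C := c)
      (fun s hs => by
        rw [uIoc_of_le hT.le] at hs
        exact hk s (Ioc_subset_Icc_self hs))
    rw [sub_zero, abs_of_pos hT] at this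
    rw [norm_smul, Real.norm_of_nonneg (by positivity)]
    calc 1 / T * ‖∫ s in (0 : ℝ)..T, k s‖ ≤ 1 / T * (c * T) := by gcongr
      _ = c := by field_simp
  have hpr : p ∈ closedBall p r := mem_closedBall_self hr.le
  have hJp : ‖J p‖ ≤ ε * (2 * C ^ 2 * T + C) := by
    refine hTT _ _ fun s hs => ?_
    have hm := (hx p hpr).2.1 s hs
    calc ‖j p s‖ ≤ C * (2 * ε * C * T) + ε * C := by
          refine norm_add_le_of_le ((hfl s _ hm _ (hsub hpr)).trans ?_) ?_
          · gcongr; exact hdev p hpr s hs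
          · rw [norm_smul, Real.norm_of_nonneg hε.le]
            gcongr; exact hgb s _ hm
      _ = ε * (2 * C ^ 2 * T + C) := by ring
  have hJl : ∀ a ∈ closedBall p r, ∀ b ∈ closedBall p r,
      ‖J a - J b‖ ≤ ε * (8 * C ^ 2 * T + 3 * C) * ‖a - b‖ := by
    intro a ha b hb
    have e : J a - J b = (1 / T) • ∫ s in (0 : ℝ)..T, (j a s - j b s) := by
      rw [intervalIntegral.integral_sub (hij a ha) (hij b hb), smul_sub]
    rw [e]
    refine hTT _ _ fun s hs => ?_
    have hma := (hx a ha).2.1 s hs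
    have hmb := (hx b hb).2.1 s hs
    -- The solution from `a` is `a + u`; the same shift is applied to `b`.
    set u : E := x a s - a with hu
    have hun : ‖u‖ ≤ 2 * ε * C * T := hdev a ha s hs
    have hau : a + u = x a s := by rw [hu]; abel
    have hbu : b + u ∈ closedBall p ρ := by
      rw [mem_closedBall, dist_eq_norm] at hb ⊢
      calc ‖b + u - p‖ = ‖(b - p) + u‖ := by congr 1; abel
        _ ≤ r + 2 * ε * C * T := norm_add_le_of_le hb hun
        _ ≤ ρ := by linarith
    have hs1 := hfs s a b u (hsub ha) (hsub hb) (by rwa [hau]) hbu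
    rw [hau] at hs1
    have hs2 := hfl s (b + u) hbu (x b s) hmb
    have e2 : b + u - x b s = (x a s - a) - (x b s - b) := by rw [hu]; abel
    rw [e2] at hs2
    have hs3 := hgl s _ hma _ hmb
    calc ‖j a s - j b s‖
        = ‖((f s (x a s) - f s (b + u) - (f s a - f s b)) + (f s (b + u) - f s (x b s)))
            + ε • (g s (x a s) - g s (x b s))‖ := by
          congr 1; simp only [j, smul_sub]; abel
      _ ≤ (C * (2 * ε * C * T) * ‖a - b‖ + C * (6 * ε * C * T * ‖a - b‖))
            + ε * (C * (3 * ‖a - b‖)) := by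
          refine norm_add_le_of_le (norm_add_le_of_le (hs1.trans ?_) (hs2.trans ?_)) ?_
          · gcongr
          · gcongr; exact hdev2 a ha b hb s hs
          · rw [norm_smul, Real.norm_of_nonneg hε.le]
            gcongr
            refine hs3.trans ?_
            gcongr; exact hgron a ha b hb s hs
      _ = ε * (8 * C ^ 2 * T + 3 * C) * ‖a - b‖ := by ring
  let Q : E → E := fun a => a - A.symm (f0 a + J a)
  have hAs : ∀ v, ‖A.symm v‖ ≤ N * ‖v‖ := fun v =>
    ((A.symm : E →L[ℝ] E).le_opNorm v).trans (by gcongr)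
  have hQl : ∀ a ∈ closedBall p r, ∀ b ∈ closedBall p r, ‖Q a - Q b‖ ≤ 1 / 2 * ‖a - b‖ := by
    intro a ha b hb
    have e : Q a - Q b = -A.symm ((f0 a - f0 b - A (a - b)) + (J a - J b)) := by
      simp only [Q, map_add, map_sub, A.symm_apply_apply]; abel
    rw [e, norm_neg]
    calc _ ≤ N * (θ * ‖a - b‖ + ε * (8 * C ^ 2 * T + 3 * C) * ‖a - b‖) := by
          refine (hAs _).trans ?_
          gcongr
          exact norm_add_le_of_le (hA a ha b hb) (hJl a ha b hb)
      _ = N * (θ + ε * (8 * C ^ 2 * T + 3 * C)) * ‖a - b‖ := by ring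
      _ ≤ 1 / 2 * ‖a - b‖ := by gcongr
  have hQp : ‖Q p - p‖ ≤ N * (ε * (2 * C ^ 2 * T + C)) := by
    have e : Q p - p = -A.symm (J p) := by simp [Q, hp0]
    rw [e, norm_neg]
    exact (hAs _).trans (by gcongr)
  have hQd : ∀ a ∈ closedBall p r,
      ‖Q a - p‖ ≤ 1 / 2 * ‖a - p‖ + N * (ε * (2 * C ^ 2 * T + C)) := by
    intro a ha
    rw [← sub_add_sub_cancel (Q a) (Q p) p]
    exact norm_add_le_of_le (hQl a ha p hpr) hQp
  have hmaps : MapsTo Q (closedBall p r) (closedBall p r) := by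
    intro a ha
    have := hQd a ha
    rw [mem_closedBall, dist_eq_norm] at ha ⊢
    linarith
  have hcontr : ContractingWith (1 / 2 : ℝ≥0) (hmaps.restrict Q _ _) := by
    refine ⟨by norm_num, LipschitzWith.of_dist_le_mul fun a b => ?_⟩
    have := hQl a a.2 b b.2
    simpa [Subtype.dist_eq, dist_eq_norm] using this
  obtain ⟨a, ha, hfix, -⟩ := hcontr.exists_fixedPoint' isClosed_closedBall.isComplete hmaps hpr
    (edist_ne_top _ _)
  have hzero : f0 a + J a = 0 := by
    have h5 : a - A.symm (f0 a + J a) = a := hfix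
    rw [sub_eq_self] at h5
    exact A.symm.map_eq_zero_iff.1 h5
  obtain ⟨hx0, hmem, hder, -⟩ := hx a ha
  refine ⟨x a, ?_, hmem, hder, ?_⟩
  · have := hdisp a ha
    rw [hzero, smul_zero, sub_eq_zero] at this
    rw [this, hx0]
  · have := hQd a ha
    rw [show Q a = a from hfix] at this
    rw [hx0]
    linarith

/-! ### The averaging theorem -/

/-- **First-order averaging theorem.** Let `Ω ⊆ ℝⁿ` be open, `T > 0`, `ε₀ > 0`, and let
`f(t,x)` and `g(t,x,ε)` be `T`-periodic in `t`, with `f` twice continuously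
differentiable in `x`, `g` continuously differentiable in `x`, all of
`f, ∂f/∂x, ∂²f/∂x², g, ∂g/∂x` continuous and bounded by a constant uniformly in `ε`.
If `p ∈ Ω` is a zero of the averaged function `f⁰(y) = (1/T)∫₀ᵀ f(t,y) dt` at which the
Jacobian `∂f⁰/∂y` has nonzero determinant, then there is `ε₁ ∈ (0, ε₀]` such that for
every `ε ∈ (0, ε₁)` the equation `ẋ = εf(t,x) + ε²g(t,x,ε)` has a `T`-periodic solution
`φ(·,ε)` in `Ω`, with `φ(0,ε) → p` as `ε → 0`. -/
theorem first_order_averaging {n : ℕ} (Ω : Set (Fin n → ℝ)) (hΩ : IsOpen Ω)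
    (T ε₀ : ℝ) (hT : 0 < T) (hε₀ : 0 < ε₀)
    (f : ℝ → (Fin n → ℝ) → Fin n → ℝ)
    (g : ℝ → (Fin n → ℝ) → ℝ → Fin n → ℝ)
    (hfper : ∀ t x, f (t + T) x = f t x)
    (hgper : ∀ t x ε, g (t + T) x ε = g t x ε)
    (hf2 : ∀ t, ContDiffOn ℝ 2 (f t) Ω)
    (hg1 : ∀ t, ∀ ε ∈ Set.Ioc (0 : ℝ) ε₀, ContDiffOn ℝ 1 (fun x => g t x ε) Ω)
    (hfc : ContinuousOn (fun q : ℝ × (Fin n → ℝ) => f q.1 q.2) (Set.univ ×ˢ Ω))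
    (hgc : ∀ ε ∈ Set.Ioc (0 : ℝ) ε₀,
      ContinuousOn (fun q : ℝ × (Fin n → ℝ) => g q.1 q.2 ε) (Set.univ ×ˢ Ω))
    (hbound : ∃ C : ℝ, ∀ t : ℝ, ∀ x ∈ Ω, ∀ ε ∈ Set.Ioc (0 : ℝ) ε₀,
      ‖f t x‖ ≤ C ∧ ‖fderiv ℝ (f t) x‖ ≤ C ∧ ‖fderiv ℝ (fderiv ℝ (f t)) x‖ ≤ C ∧
        ‖g t x ε‖ ≤ C ∧ ‖fderiv ℝ (fun y => g t y ε) x‖ ≤ C)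
    (f0 : (Fin n → ℝ) → Fin n → ℝ)
    (hf0 : ∀ y, f0 y = (1 / T) • ∫ t in (0 : ℝ)..T, f t y)
    (p : Fin n → ℝ) (hp : p ∈ Ω) (hp0 : f0 p = 0)
    (hdet : (fderiv ℝ f0 p).det ≠ 0) :
    ∃ ε₁ : ℝ, 0 < ε₁ ∧ ε₁ ≤ ε₀ ∧ ∃ φ : ℝ → ℝ → Fin n → ℝ,
      (∀ ε : ℝ, 0 < ε → ε < ε₁ →
        (∀ t, φ ε t ∈ Ω) ∧
        (∀ t, HasDerivAt (φ ε) (ε • f t (φ ε t) + ε ^ 2 • g t (φ ε t) ε) t) ∧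
        (∀ t, φ ε (t + T) = φ ε t)) ∧
      Filter.Tendsto (fun ε => φ ε 0) (nhdsWithin 0 (Set.Ioi 0)) (nhds p) := by
  obtain ⟨C, hC⟩ := hbound
  have hε₀m : ε₀ ∈ Ioc 0 ε₀ := ⟨hε₀, le_rfl⟩
  have hC0 : 0 ≤ C := (norm_nonneg _).trans (hC 0 p hp ε₀ hε₀m).1
  obtain ⟨ρ, hρ, hρΩ⟩ := Metric.nhds_basis_closedBall.mem_iff.1 (hΩ.mem_nhds hp)
  have hB : Convex ℝ (closedBall p ρ) := convex_closedBall p ρ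
  have hprod : (univ : Set ℝ) ×ˢ closedBall p ρ ⊆ univ ×ˢ Ω := prod_mono subset_rfl hρΩ
  have hfd : ∀ t, ∀ x ∈ closedBall p ρ, HasFDerivAt (f t) (fderiv ℝ (f t) x) x := fun t x hx =>
    (((hf2 t).differentiableOn (by norm_num)).differentiableAt
      (hΩ.mem_nhds (hρΩ hx))).hasFDerivAt
  have hfdd : ∀ t, ∀ x ∈ closedBall p ρ,
      HasFDerivAt (fderiv ℝ (f t)) (fderiv ℝ (fderiv ℝ (f t)) x) x := fun t x hx =>
    ((((hf2 t).fderiv_of_isOpen (m := 1) hΩ (by norm_num)).differentiableOn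
      (by norm_num)).differentiableAt (hΩ.mem_nhds (hρΩ hx))).hasFDerivAt
  have hfl : ∀ t, ∀ x ∈ closedBall p ρ, ∀ y ∈ closedBall p ρ,
      ‖f t x - f t y‖ ≤ C * ‖x - y‖ := fun t x hx y hy =>
    hB.norm_image_sub_le_of_norm_hasFDerivWithin_le (𝕜 := ℝ)
      (fun z hz => (hfd t z hz).hasFDerivWithinAt)
      (fun z hz => (hC t z (hρΩ hz) ε₀ hε₀m).2.1) hy hx
  have hgl : ∀ ε ∈ Ioc 0 ε₀, ∀ t, ∀ x ∈ closedBall p ρ, ∀ y ∈ closedBall p ρ,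
      ‖g t x ε - g t y ε‖ ≤ C * ‖x - y‖ := fun ε hε t x hx y hy =>
    hB.norm_image_sub_le_of_norm_hasFDerivWithin_le (𝕜 := ℝ) (f := fun z => g t z ε)
      (fun z hz => (((hg1 t ε hε).differentiableOn (by norm_num)).differentiableAt
        (hΩ.mem_nhds (hρΩ hz))).hasFDerivAt.hasFDerivWithinAt)
      (fun z hz => (hC t z (hρΩ hz) ε hε).2.2.2.2) hy hx
  have hfs : ∀ t, ∀ a b u : Fin n → ℝ, a ∈ closedBall p ρ → b ∈ closedBall p ρ →
      a + u ∈ closedBall p ρ → b + u ∈ closedBall p ρ →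
      ‖f t (a + u) - f t (b + u) - (f t a - f t b)‖ ≤ C * ‖u‖ * ‖a - b‖ :=
    fun t a b u ha hb hau hbu => norm_second_difference_le (hfd t) (hfdd t)
      (fun z hz => (hC t z (hρΩ hz) ε₀ hε₀m).2.2.1) ha hb hau hbu
  have hint : ∀ a ∈ closedBall p ρ, IntervalIntegrable (fun t => f t a) volume 0 T :=
    fun a ha => (hfc.comp_continuous (f := fun t : ℝ => (t, a)) (by fun_prop)
      (fun t => ⟨mem_univ _, hρΩ ha⟩)).intervalIntegrable 0 T
  have hf0s : ∀ a b u : Fin n → ℝ, a ∈ closedBall p ρ → b ∈ closedBall p ρ →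
      a + u ∈ closedBall p ρ → b + u ∈ closedBall p ρ →
      ‖f0 (a + u) - f0 (b + u) - (f0 a - f0 b)‖ ≤ C * ‖u‖ * ‖a - b‖ := by
    intro a b u ha hb hau hbu
    have e : f0 (a + u) - f0 (b + u) - (f0 a - f0 b) =
        (1 / T) • ∫ t in (0 : ℝ)..T, (f t (a + u) - f t (b + u) - (f t a - f t b)) := by
      rw [intervalIntegral.integral_sub ((hint _ hau).sub (hint _ hbu))
          ((hint _ ha).sub (hint _ hb)), intervalIntegral.integral_sub (hint _ hau) (hint _ hbu),
        intervalIntegral.integral_sub (hint _ ha) (hint _ hb)]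
      simp only [hf0, smul_sub]
    have h := intervalIntegral.norm_integral_le_of_norm_le_const (a := 0) (b := T)
      (f := fun t => f t (a + u) - f t (b + u) - (f t a - f t b))
      (fun t _ => hfs t a b u ha hb hau hbu)
    rw [sub_zero, abs_of_pos hT] at h
    rw [e, norm_smul, Real.norm_of_nonneg (by positivity)]
    calc _ ≤ 1 / T * (C * ‖u‖ * ‖a - b‖ * T) := by gcongr
      _ = C * ‖u‖ * ‖a - b‖ := by field_simp
  -- A junk value `fderiv ℝ f0 p = 0` has zero determinant, except in dimension zero, where
  -- every map is differentiable.
  have hdiff : DifferentiableAt ℝ f0 p := by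
    by_contra hnd
    rw [fderiv_zero_of_not_differentiableAt hnd] at hdet
    rcases Nat.eq_zero_or_pos n with rfl | hn
    · exact hnd (hasFDerivAt_of_subsingleton f0 p).differentiableAt
    · apply hdet
      have : Nonempty (Fin n) := ⟨⟨0, hn⟩⟩
      simp [ContinuousLinearMap.det]
  let A : (Fin n → ℝ) ≃L[ℝ] (Fin n → ℝ) :=
    (fderiv ℝ f0 p).toContinuousLinearEquivOfDetNeZero hdet
  set N : ℝ := ‖(A.symm : (Fin n → ℝ) →L[ℝ] (Fin n → ℝ))‖ with hNdef
  have hN0 : 0 ≤ N := norm_nonneg _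
  have hθ : 0 < 1 / (4 * (N + 1)) := by positivity
  have hNθ : N * (1 / (4 * (N + 1))) ≤ 1 / 4 := by
    rw [mul_one_div, div_le_div_iff₀ (by positivity) (by norm_num)]; linarith
  obtain ⟨r, hr, hrρ, hstrict⟩ := exists_norm_sub_sub_le hρ hC0 hθ hdiff.hasFDerivAt hf0s
  have hsmall : ∀ c d : ℝ, 0 ≤ c → 0 < d → ∃ δ > 0, ∀ ε : ℝ, 0 < ε → ε < δ → ε * c ≤ d := by
    intro c d hc hd
    refine ⟨d / (c + 1), by positivity, fun ε h0 h => ?_⟩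
    rw [lt_div_iff₀ (by positivity)] at h
    linarith
  obtain ⟨δ₁, hδ₁, H1⟩ := hsmall (2 * C * T) (ρ / 2) (by positivity) (by positivity)
  obtain ⟨δ₂, hδ₂, H2⟩ := hsmall (2 * C * T) 1 (by positivity) one_pos
  obtain ⟨δ₃, hδ₃, H3⟩ := hsmall (N * (8 * C ^ 2 * T + 3 * C)) (1 / 4) (by positivity) (by norm_num)
  obtain ⟨δ₄, hδ₄, H4⟩ := hsmall (N * (2 * C ^ 2 * T + C)) (r / 2) (by positivity) (by positivity)
  set ε₁ : ℝ := min ε₀ (min 1 (min (min δ₁ δ₂) (min δ₃ δ₄))) with hε₁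
  have hε₁pos : 0 < ε₁ := by positivity
  have hex : ∀ ε : ℝ, ∃ φ : ℝ → Fin n → ℝ, 0 < ε → ε < ε₁ →
      ((∀ t, φ t ∈ Ω) ∧
        (∀ t, HasDerivAt φ (ε • f t (φ t) + ε ^ 2 • g t (φ t) ε) t) ∧
        (∀ t, φ (t + T) = φ t)) ∧ ‖φ 0 - p‖ ≤ 2 * (N * (ε * (2 * C ^ 2 * T + C))) := by
    intro ε
    by_cases hε : 0 < ε ∧ ε < ε₁
    swap
    · exact ⟨0, fun h hlt => absurd ⟨h, hlt⟩ hε⟩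
    obtain ⟨hε0, hεlt⟩ := hε
    have hlt := hεlt
    simp only [hε₁, lt_min_iff] at hlt
    obtain ⟨l0, l1, ⟨l2, l3⟩, l4, l5⟩ := hlt
    have hm : ε ∈ Ioc 0 ε₀ := ⟨hε0, l0.le⟩
    obtain ⟨x, hend, hmem, hder, hclose⟩ := exists_closed_solution (f := f)
      (g := fun t x => g t x ε) (A := A) (N := N) (ρ := ρ) hT hC0 hr hrρ hε0 l1.le
      (hfc.mono hprod) ((hgc ε hm).mono hprod)
      (fun t x hx => (hC t x (hρΩ hx) ε hm).1)
      (fun t x hx => (hC t x (hρΩ hx) ε hm).2.2.2.1)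
      hfl (hgl ε hm) hfs hf0 hp0 le_rfl hstrict
      (by linarith [H1 ε hε0 l2]) (by linarith [H2 ε hε0 l3])
      (by rw [mul_add]; linarith [H3 ε hε0 l4]) (by linarith [H4 ε hε0 l5])
    obtain ⟨φ, hφ0, hφx, hφd, hφp⟩ := exists_periodic_extension
      (F := fun t x => ε • f t x + ε ^ 2 • g t x ε) hT
      (fun t x => by simp only [hfper, hgper]) hder hend
    refine ⟨φ, fun _ _ => ⟨⟨fun t => ?_, hφd, hφp⟩, by rwa [hφ0]⟩⟩
    obtain ⟨s, hs, hφs⟩ := hφx t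
    rw [hφs]
    exact hρΩ (hmem s hs)
  choose φ hφ using hex
  refine ⟨ε₁, hε₁pos, min_le_left _ _, φ, fun ε h hlt => (hφ ε h hlt).1, ?_⟩
  rw [tendsto_iff_norm_sub_tendsto_zero]
  have hlim : Filter.Tendsto (fun ε : ℝ => 2 * (N * (ε * (2 * C ^ 2 * T + C))))
      (nhdsWithin 0 (Ioi 0)) (nhds 0) := by
    have : Continuous fun ε : ℝ => 2 * (N * (ε * (2 * C ^ 2 * T + C))) := by fun_prop
    simpa using (this.tendsto 0).mono_left nhdsWithin_le_nhds
  refine squeeze_zero' (Filter.Eventually.of_forall fun _ => norm_nonneg _) ?_ hlim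
  filter_upwards [Ioo_mem_nhdsGT hε₁pos] with ε hε
  exact (hφ ε hε.1 hε.2).2
end

section
/- (Second-order averaging.) Let Ω ⊆ ℝⁿ be open, T > 0, ε₀ > 0, and let f, g : ℝ × Ω → ℝⁿ and R : ℝ × Ω × (0, ε₀] → ℝⁿ be T-periodic in the first variable, with ∂f/∂x Lipschitz in x, g and R Lipschitz in x, all continuous, and |R| bounded uniformly. Define f⁰(y) = (1/T)·∫₀ᵀ f(t,y) dt, y¹(t,x) = ∫₀ᵗ f(s,x) ds, f¹(t,x) = (∂f/∂x)(t,x)·y¹(t,x), and let f¹⁰ and g⁰ be the averages over [0,T] of f¹ and g respectively. Suppose f⁰ ≡ 0 on Ω and p ∈ Ω satisfies f¹⁰(p) + g⁰(p) = 0 and det( ∂(f¹⁰ + g⁰)/∂y (p) ) ≠ 0. Then there exists ε₁ ∈ (0, ε₀] such that for every ε ∈ (0, ε₁) the differential equation ẋ = ε·f(t,x) + ε²·g(t,x) + ε³·R(t,x,ε) has a T-periodic solution φ(·, ε), and φ(0, ε) → p as ε → 0. -/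
/-!
Along a solution starting at `z`, the displacement over one period is
`x(T) - z = ε² T F(z) + O(ε³)` with `F = f¹⁰ + g⁰`, uniformly for `z` near `p`, because the mean of
`f` vanishes (`displacement_estimate`). Periodic solutions correspond to zeros of the rescaled
displacement `Q(z) = (x(T) - z) / (ε² T)`, which is Lipschitz in `z` and `O(ε)`-close to `F`.

Only closeness in the uniform norm is available, since `R` is merely Lipschitz and `F` is only known
to be differentiable at `p`; so a topological argument produces the zero of `Q`: the map
`z ↦ z - F'(p)⁻¹ Q(z)` sends a cube of radius `D ε` around `p` to itself, hence has a fixed point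
(`exists_zero_of_perturbation`). Extending the resulting solution periodically
(`exists_periodic_extension`) gives `φ(·, ε)`, and `‖φ(0, ε) - p‖ ≤ D ε` gives the limit.

The fixed point theorem needed is Brouwer's for Lipschitz maps of a cube (`brouwer_lipschitz`). It
follows from the absence of a Lipschitz retraction of a cube onto its boundary
(`no_lipschitz_retraction`), proved by integrating the Jacobian determinant of `x ↦ x + t U(x)`,
which is polynomial in `t`. The norm on `Fin n → ℝ` is the sup norm throughout, so balls are cubes.
-/

section

open MeasureTheory Set Metric

namespace SecondOrderAveraging

/-! ### The no-retraction theorem for Lipschitz maps -/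

/-- The polynomial `t ↦ det (1 + t M)` has degree at most `n`, so Lagrange interpolation expresses its
value at `1` through its values at any `n + 1` distinct nodes, with weights independent of `M`. -/
theorem det_one_add_eq_sum {n : ℕ} (v : Fin (n + 1) → ℝ) (hv : Function.Injective v) :
    ∃ c : Fin (n + 1) → ℝ, ∑ k, c k = 1 ∧
      ∀ M : (Fin n → ℝ) →L[ℝ] (Fin n → ℝ),
        (1 + M).det = ∑ k, c k * (1 + v k • M).det := by
  refine ⟨fun k => (Lagrange.basis Finset.univ v k).eval 1, ?_, fun M => ?_⟩
  · rw [← Polynomial.eval_finsetSum, Lagrange.sum_basis hv.injOn Finset.univ_nonempty]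
    simp
  · set A := LinearMap.toMatrix' (M : (Fin n → ℝ) →ₗ[ℝ] (Fin n → ℝ)) with hA
    set P : Polynomial ℝ :=
      ((Polynomial.X : Polynomial ℝ) • A.map Polynomial.C +
        (1 : Matrix (Fin n) (Fin n) ℝ).map Polynomial.C).det
      with hP
    have hdeg : P.degree < ((Finset.univ : Finset (Fin (n + 1))).card : WithBot ℕ) := by
      refine lt_of_le_of_lt Polynomial.degree_le_natDegree ?_
      have := Polynomial.natDegree_det_X_add_C_le A 1
      rw [Fintype.card_fin] at this
      simp only [Finset.card_univ, Fintype.card_fin]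
      exact_mod_cast Nat.lt_succ_of_le this
    have hev : ∀ t : ℝ, P.eval t = (1 + t • M).det := by
      intro t
      have h1 : (1 + t • M).det
          = (LinearMap.toMatrix' ((1 + t • M : (Fin n → ℝ) →L[ℝ] (Fin n → ℝ)) :
            (Fin n → ℝ) →ₗ[ℝ] (Fin n → ℝ))).det := by
        rw [LinearMap.det_toMatrix']
      have h2 : LinearMap.toMatrix' ((1 + t • M : (Fin n → ℝ) →L[ℝ] (Fin n → ℝ)) :
            (Fin n → ℝ) →ₗ[ℝ] (Fin n → ℝ)) = t • A + 1 := by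
        have : ((1 + t • M : (Fin n → ℝ) →L[ℝ] (Fin n → ℝ)) : (Fin n → ℝ) →ₗ[ℝ] (Fin n → ℝ))
          = LinearMap.id + t • (M : (Fin n → ℝ) →ₗ[ℝ] (Fin n → ℝ)) := rfl
        rw [this, map_add, map_smul, LinearMap.toMatrix'_id, add_comm]
      rw [h1, h2, hP, ← Polynomial.coe_evalRingHom, RingHom.map_det]
      congr 1
      ext i j
      rcases eq_or_ne i j with rfl | hij
      · simp
        ring
      · simp [Matrix.one_apply_ne hij]
        ring
    have := Lagrange.eq_interpolate (v := v) hv.injOn hdeg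
    have h1 : (1 + M).det = P.eval 1 := by rw [hev]; simp
    rw [h1]
    nth_rw 1 [this]
    rw [Lagrange.interpolate_apply, Polynomial.eval_finsetSum]
    refine Finset.sum_congr rfl fun k _ => ?_
    rw [Polynomial.eval_mul, Polynomial.eval_C, hev, mul_comm]

/-- A small Lipschitz perturbation of the identity that fixes everything outside a ball is injective and
maps the ball onto itself. -/
theorem image_ball_eq {E : Type*} [NormedAddCommGroup E] [NormedSpace ℝ E] [CompleteSpace E]
    {U : E → E} {c : NNReal} (hU : LipschitzWith c U)
    {r : ℝ} (h0 : ∀ x, r ≤ ‖x‖ → U x = 0) {t : ℝ} (ht : 0 ≤ t) (htc : t * c < 1) :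
    Function.Injective (fun x => x + t • U x) ∧
      (fun x => x + t • U x) '' ball 0 r = ball 0 r := by
  have happ : ApproximatesLinearOn (fun x => x + t • U x)
      ((ContinuousLinearEquiv.refl ℝ E : E ≃L[ℝ] E) : E →L[ℝ] E) univ (t.toNNReal * c) := by
    intro x _ y _
    have : (x + t • U x) - (y + t • U y) -
        ((ContinuousLinearEquiv.refl ℝ E : E ≃L[ℝ] E) : E →L[ℝ] E) (x - y)
          = t • (U x - U y) := by
      simp [smul_sub]; abel
    rw [this, norm_smul, Real.norm_of_nonneg ht, NNReal.coe_mul, Real.coe_toNNReal _ ht, mul_assoc]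
    gcongr
    exact hU.norm_sub_le x y
  have hc : Subsingleton E ∨ t.toNNReal * c <
      ‖(((ContinuousLinearEquiv.refl ℝ E).symm : E ≃L[ℝ] E) : E →L[ℝ] E)‖₊⁻¹ := by
    rcases subsingleton_or_nontrivial E with h | h
    · exact Or.inl h
    · right
      have : ‖(((ContinuousLinearEquiv.refl ℝ E).symm : E ≃L[ℝ] E) : E →L[ℝ] E)‖₊ = 1 := by
        ext; simp
      rw [this, inv_one, ← NNReal.coe_lt_coe, NNReal.coe_mul, Real.coe_toNNReal _ ht]
      simpa using htc
  have hinj : Function.Injective (fun x => x + t • U x) :=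
    injOn_univ.1 (happ.injOn hc)
  have hsurj : Function.Surjective (fun x => x + t • U x) := happ.surjective hc
  refine ⟨hinj, Subset.antisymm ?_ ?_⟩
  · rintro _ ⟨x, hx, rfl⟩
    by_contra hy
    rw [mem_ball_zero_iff, not_lt] at hy
    have : x = x + t • U x := hinj (by simp only [h0 _ hy]; simp)
    simp only [← this] at hy
    exact absurd (mem_ball_zero_iff.1 hx) (not_lt.2 hy)
  · intro y hy
    obtain ⟨x, rfl⟩ := hsurj y
    refine ⟨x, ?_, rfl⟩
    by_contra hx
    have hx' : r ≤ ‖x‖ := by simpa using hx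
    simp only [h0 x hx', smul_zero, add_zero] at hy
    exact hx hy

/-- A cube has no Lipschitz retraction `x ↦ x + U x` onto its boundary. Integrate the Jacobian
determinant of `x ↦ x + t U x` over the cube: for small `t` the value is the volume of the cube, by
the change of variables formula (with Rademacher's theorem and Lusin's property N for Lipschitz
maps), and by interpolation in `t` it is still the volume at `t = 1`. There, however, the
determinant vanishes almost everywhere, since the image lies in the boundary. -/
theorem no_lipschitz_retraction {n : ℕ} {U : (Fin n → ℝ) → Fin n → ℝ} {c : NNReal}
    (hU : LipschitzWith c U) {r : ℝ} (hr : 0 < r) (h0 : ∀ x, r ≤ ‖x‖ → U x = 0)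
    (h1 : ∀ x, ‖x‖ < r → ‖x + U x‖ = r) : False := by
  have hdiff : ∀ᵐ x ∂(volume : Measure (Fin n → ℝ)), DifferentiableAt ℝ U x :=
    hU.ae_differentiableAt
  have hnorm : ∀ x, ‖fderiv ℝ U x‖ ≤ c := fun x => norm_fderiv_le_of_lipschitz ℝ hU
  have hmeas : Measurable (fderiv ℝ U) := measurable_fderiv ℝ U
  set B : Set (Fin n → ℝ) := ball 0 r with hB
  have hBm : MeasurableSet B := measurableSet_ball
  have hBfin : volume B < ⊤ := measure_ball_lt_top
  have hBpos : 0 < volume B := measure_ball_pos _ _ hr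
  -- at a point of differentiability inside the ball, an extremal coordinate of `x + U x`
  -- has zero differential
  have hdet0 : ∀ x ∈ B, DifferentiableAt ℝ U x → (1 + fderiv ℝ U x).det = 0 := by
    intro x hx hdx
    have hx' : ‖x‖ < r := by simpa [hB] using hx
    have hn : Nonempty (Fin n) := by
      rcases isEmpty_or_nonempty (Fin n) with h | h
      · have := h1 x hx'
        rw [Subsingleton.elim (x + U x) 0, norm_zero] at this
        exact absurd this hr.ne
      · exact h
    obtain ⟨i, hi⟩ := Finite.exists_max (fun i => ‖(x + U x) i‖)
    have hir : |x i + U x i| = r := by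
      refine le_antisymm ?_ ?_
      · rw [← h1 x hx']; exact norm_le_pi_norm (x + U x) i
      · rw [← h1 x hx']; exact (pi_norm_le_iff_of_nonneg (norm_nonneg _)).2 hi
    have hbd : ∀ᶠ y in nhds x, |y i + U y i| ≤ r := by
      filter_upwards [isOpen_ball.mem_nhds hx] with y hy
      rw [← h1 y (by simpa using hy)]; exact norm_le_pi_norm (y + U y) i
    have hd : HasFDerivAt (fun y : Fin n → ℝ => y i + U y i)
        ((ContinuousLinearMap.proj i).comp (1 + fderiv ℝ U x)) x := by
      have h := (hasFDerivAt_id x).add hdx.hasFDerivAt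
      exact (hasFDerivAt_pi'.1 h i)
    have hz : (ContinuousLinearMap.proj i).comp (1 + fderiv ℝ U x)
        = (0 : (Fin n → ℝ) →L[ℝ] ℝ) := by
      rcases (abs_eq hr.le).1 hir with h | h
      · refine IsLocalMax.hasFDerivAt_eq_zero (f := fun y : Fin n → ℝ => y i + U y i) ?_ hd
        filter_upwards [hbd] with y hy
        simp only [h]; exact (abs_le.1 hy).2
      · refine IsLocalMin.hasFDerivAt_eq_zero (f := fun y : Fin n → ℝ => y i + U y i) ?_ hd
        filter_upwards [hbd] with y hy
        simp only [h]; exact (abs_le.1 hy).1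
    by_contra hne
    have hs : Function.Surjective
        ((1 + fderiv ℝ U x : (Fin n → ℝ) →L[ℝ] (Fin n → ℝ)) : (Fin n → ℝ) → Fin n → ℝ) :=
      (ContinuousLinearMap.toContinuousLinearEquivOfDetNeZero _ hne).surjective
    obtain ⟨w, hw⟩ := hs (Pi.single i 1)
    have := DFunLike.congr_fun hz w
    simp only [ContinuousLinearMap.comp_apply, hw] at this
    simp at this
  have hint : ∀ t : ℝ, IntegrableOn (fun x => (1 + t • fderiv ℝ U x).det) B := by
    intro t
    have hcont : Continuous fun M : (Fin n → ℝ) →L[ℝ] (Fin n → ℝ) => (1 + t • M).det :=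
      ContinuousLinearMap.continuous_det.comp (by fun_prop)
    obtain ⟨C, hC⟩ := (isCompact_closedBall (0 : (Fin n → ℝ) →L[ℝ] (Fin n → ℝ)) c).exists_bound_of_continuousOn
      hcont.continuousOn
    refine Measure.integrableOn_of_bounded (M := C) hBfin.ne
      (hcont.measurable.comp hmeas).aestronglyMeasurable ?_
    exact Filter.Eventually.of_forall fun x => hC _ (by simpa using hnorm x)
  -- for small `t` the Jacobian integral is the volume of the image, which is the ball itself
  have hvol : ∃ t₀ > (0 : ℝ), ∀ t : ℝ, 0 ≤ t → t < t₀ →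
      ∫ x in B, (1 + t • fderiv ℝ U x).det = (volume B).toReal := by
    have hpos : ∃ η > 0, ∀ N : (Fin n → ℝ) →L[ℝ] (Fin n → ℝ), ‖N‖ < η → 0 < (1 + N).det := by
      have hcont : Continuous fun M : (Fin n → ℝ) →L[ℝ] (Fin n → ℝ) => (1 + M).det :=
        ContinuousLinearMap.continuous_det.comp (by fun_prop)
      have : ∀ᶠ N in nhds (0 : (Fin n → ℝ) →L[ℝ] (Fin n → ℝ)), 0 < (1 + N).det := by
        refine hcont.continuousAt.eventually (lt_mem_nhds ?_)
        have : (1 + 0 : (Fin n → ℝ) →L[ℝ] (Fin n → ℝ)).det = 1 := by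
          rw [add_zero]; exact LinearMap.det_id
        simp only [this]; exact one_pos
      obtain ⟨η, hη, h⟩ := Metric.eventually_nhds_iff.1 this
      exact ⟨η, hη, fun N hN => h (by simpa using hN)⟩
    obtain ⟨η, hη, hpos⟩ := hpos
    refine ⟨min 1 η / (c + 1), by positivity, fun t ht ht' => ?_⟩
    have hlt : t * (c + 1) < min 1 η := by rwa [lt_div_iff₀ (by positivity)] at ht'
    have htc : t * c < min 1 η := by nlinarith
    obtain ⟨hinj, himg⟩ := image_ball_eq hU h0 ht (htc.trans_le (min_le_left _ _))
    set D : Set (Fin n → ℝ) := {x | DifferentiableAt ℝ U x}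
    have hDm : MeasurableSet D := measurableSet_of_differentiableAt ℝ U
    have hnull : volume (B \ D) = 0 :=
      measure_mono_null (fun x hx => hx.2) hdiff
    have hlip : LipschitzWith (1 + t.toNNReal * c) (fun x => x + t • U x) := by
      refine LipschitzWith.id.add (LipschitzWith.of_dist_le_mul fun x y => ?_)
      rw [dist_eq_norm, ← smul_sub, norm_smul, NNReal.coe_mul, Real.coe_toNNReal _ ht,
        Real.norm_of_nonneg ht, mul_assoc]
      gcongr
      rw [← dist_eq_norm]
      exact hU.dist_le_mul x y
    have hnull' : volume ((fun x => x + t • U x) '' (B \ D)) = 0 := by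
      rw [← hausdorffMeasure_pi_real] at hnull ⊢
      refine le_antisymm ((hlip.hausdorffMeasure_image_le (Nat.cast_nonneg _) _).trans ?_) bot_le
      rw [hnull, mul_zero]
    have hder : ∀ x ∈ B ∩ D, HasFDerivWithinAt (fun x => x + t • U x)
        (1 + t • fderiv ℝ U x) (B ∩ D) x := fun x hx =>
      ((hasFDerivAt_id x).add ((show DifferentiableAt ℝ U x from hx.2).hasFDerivAt.const_smul t)).hasFDerivWithinAt
    have hcv := lintegral_abs_det_fderiv_eq_addHaar_image volume (hBm.inter hDm) hder hinj.injOn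
    have hvolimg : volume ((fun x => x + t • U x) '' (B ∩ D)) = volume B := by
      refine le_antisymm (measure_mono ((image_mono inter_subset_left).trans himg.subset)) ?_
      calc volume B = volume ((fun x => x + t • U x) '' (B ∩ D ∪ B \ D)) := by
            rw [inter_union_sdiff, himg]
        _ ≤ volume ((fun x => x + t • U x) '' (B ∩ D)) +
            volume ((fun x => x + t • U x) '' (B \ D)) := by
            rw [image_union]; exact measure_union_le _ _
        _ = _ := by rw [hnull', add_zero]
    have hdetpos : ∀ x, 0 < (1 + t • fderiv ℝ U x).det := fun x => hpos _ (by
      rw [norm_smul, Real.norm_of_nonneg ht]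
      exact (mul_le_mul_of_nonneg_left (hnorm x) ht).trans_lt (htc.trans_le (min_le_right _ _)))
    rw [integral_eq_lintegral_of_nonneg_ae (Filter.Eventually.of_forall fun x => (hdetpos x).le)
      (hint t).aestronglyMeasurable, ← hvolimg, ← hcv]
    congr 1
    have hae : (B ∩ D : Set (Fin n → ℝ)) =ᵐ[volume] B := by
      filter_upwards [hdiff] with x hx
      exact propext ⟨fun h => h.1, fun h => ⟨h, hx⟩⟩
    rw [setLIntegral_congr hae]
    exact lintegral_congr fun x => by rw [abs_of_pos (hdetpos x)]
  obtain ⟨t₀, ht₀, hvol⟩ := hvol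
  -- `n + 1` interpolation nodes in `[0, t₀)`
  obtain ⟨a, ha1, ha⟩ := det_one_add_eq_sum (n := n) (fun k => t₀ * (k : ℕ) / (n + 1)) (by
    intro k l hkl
    have h : (n : ℝ) + 1 ≠ 0 := by positivity
    have hkl' := mul_left_cancel₀ ht₀.ne' ((div_left_inj' h).1 hkl)
    exact Fin.ext (by exact_mod_cast hkl'))
  have hI1 : ∫ x in B, (1 + fderiv ℝ U x).det = (volume B).toReal := by
    rw [funext fun x => ha (fderiv ℝ U x),
      integral_finsetSum _ fun k _ => (hint _).const_mul _]
    simp only [integral_const_mul]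
    rw [Finset.sum_congr rfl fun k _ => ?_, ← Finset.sum_mul, ha1, one_mul]
    rw [hvol _ (by positivity)]
    rw [div_lt_iff₀ (by positivity)]
    have : ((k : ℕ) : ℝ) < n + 1 := by exact_mod_cast k.2
    exact mul_lt_mul_of_pos_left this ht₀
  have hI0 : ∫ x in B, (1 + fderiv ℝ U x).det = 0 := by
    rw [setIntegral_congr_ae (g := fun _ => (0 : ℝ)) hBm, integral_zero]
    filter_upwards [hdiff] with x hx hxB
    exact hdet0 x hxB hx
  have := ENNReal.toReal_pos hBpos.ne' hBfin.ne
  rw [← hI1, hI0] at this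
  exact lt_irrefl _ this

/-! ### Brouwer's theorem for Lipschitz maps of a cube -/

/-- The coordinatewise projection of `Fin n → ℝ` onto the cube `closedBall p r`. In the sup norm
it is `1`-Lipschitz. -/
def clamp {n : ℕ} (p : Fin n → ℝ) (r : ℝ) (x : Fin n → ℝ) : Fin n → ℝ :=
  fun i => max (p i - r) (min (p i + r) (x i))

theorem lipschitzWith_clamp {n : ℕ} (p : Fin n → ℝ) (r : ℝ) : LipschitzWith 1 (clamp p r) := by
  refine LipschitzWith.of_dist_le_mul fun x y => ?_
  rw [NNReal.coe_one, one_mul]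
  refine (dist_pi_le_iff dist_nonneg).2 fun i => ?_
  refine le_trans ?_ (dist_le_pi_dist x y i)
  simp only [clamp, Real.dist_eq]
  rw [max_comm, max_comm (p i - r)]
  refine (abs_max_sub_max_le_abs _ _ _).trans ?_
  rw [min_comm, min_comm (p i + r)]
  exact abs_inf_sub_inf_le_abs _ _ _

theorem clamp_mem {n : ℕ} (p : Fin n → ℝ) {r : ℝ} (hr : 0 ≤ r) (x : Fin n → ℝ) :
    clamp p r x ∈ closedBall p r := by
  refine mem_closedBall.2 ((dist_pi_le_iff hr).2 fun i => ?_)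
  rw [Real.dist_eq, abs_le]
  have h1 := le_max_left (p i - r) (min (p i + r) (x i))
  have h2 : max (p i - r) (min (p i + r) (x i)) ≤ p i + r :=
    max_le (by linarith) (min_le_left _ _)
  simp only [clamp]
  constructor <;> linarith

theorem clamp_of_mem {n : ℕ} {p : Fin n → ℝ} {r : ℝ} {x : Fin n → ℝ}
    (hx : x ∈ closedBall p r) : clamp p r x = x := by
  funext i
  have h := (dist_le_pi_dist x p i).trans (mem_closedBall.1 hx)
  rw [Real.dist_eq, abs_le] at h
  simp only [clamp]
  rw [min_eq_right (by linarith), max_eq_right (by linarith)]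

theorem norm_clamp_zero_of_le {n : ℕ} {r : ℝ} (hr : 0 < r) {x : Fin n → ℝ} (hx : r ≤ ‖x‖) :
    ‖clamp 0 r x‖ = r := by
  refine le_antisymm (by simpa using clamp_mem 0 hr.le x) ?_
  have : ∃ i, r ≤ |x i| := by
    by_contra! h
    exact absurd hx (not_le.2 ((pi_norm_lt_iff hr).2 h))
  obtain ⟨i, hi⟩ := this
  refine le_trans ?_ (norm_le_pi_norm (clamp 0 r x) i)
  simp only [clamp, Pi.zero_apply, zero_sub, zero_add, Real.norm_eq_abs]
  rcases le_abs.1 hi with h | h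
  · rw [min_eq_left h, max_eq_right (by linarith)]; exact le_abs_self r
  · rw [min_eq_right (by linarith), max_eq_left (by linarith), abs_neg]; exact le_abs_self r

theorem locallyLipschitz_smul {α E : Type*} [PseudoEMetricSpace α] [NormedAddCommGroup E]
    [NormedSpace ℝ E] {a : α → ℝ} {b : α → E} (ha : LocallyLipschitz a)
    (hb : LocallyLipschitz b) : LocallyLipschitz fun x => a x • b x := by
  have h : LocallyLipschitz fun q : ℝ × E => q.1 • q.2 :=
    ContDiff.locallyLipschitz (𝕂 := ℝ) (contDiff_fst.smul contDiff_snd)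
  exact h.comp (ha.prodMk hb)

/-- Brouwer's fixed point theorem for Lipschitz self-maps of the unit cube. From a map without fixed
points a retraction of the cube of radius `2` onto its boundary is built: the field `x - k x` is
deformed to the identity across the shell `1 ≤ ‖x‖ ≤ 2`, stretched until its norm is at least `2`,
and clamped coordinatewise. All these operations preserve the Lipschitz property. -/
theorem brouwer_unit_cube {n : ℕ} {k : (Fin n → ℝ) → Fin n → ℝ} {c : NNReal}
    (hk : LipschitzOnWith c k (closedBall 0 1)) (hmaps : MapsTo k (closedBall 0 1) (closedBall 0 1)) :
    ∃ x ∈ closedBall (0 : Fin n → ℝ) 1, k x = x := by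
  by_contra! hno
  set K : (Fin n → ℝ) → Fin n → ℝ := fun x => k (clamp 0 1 x) with hKdef
  have hKL : LipschitzWith c K := by
    have := hk.comp (lipschitzWith_clamp (0 : Fin n → ℝ) 1).lipschitzOnWith (s := univ)
      fun x _ => clamp_mem 0 zero_le_one x
    simpa [lipschitzOnWith_univ, Function.comp_def] using this
  have hK1 : ∀ x, ‖K x‖ ≤ 1 := fun x => by
    simpa using hmaps (clamp_mem 0 zero_le_one x)
  -- `H x` is `x - k x` on the unit cube and `x` on the sphere of radius `2`
  set H : (Fin n → ℝ) → Fin n → ℝ := fun x => x - min 1 (2 - ‖x‖) • K x with hHdef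
  have hs : LocallyLipschitz fun x : Fin n → ℝ => 2 - ‖x‖ :=
    (LocallyLipschitz.const 2).sub lipschitzWith_one_norm.locallyLipschitz
  have hH : LocallyLipschitz H :=
    LocallyLipschitz.id.sub (locallyLipschitz_smul (hs.const_min 1) hKL.locallyLipschitz)
  have hHfar : ∀ x, 1 ≤ ‖x‖ → ‖x‖ ≤ 2 → 2 * ‖x‖ - 2 ≤ ‖H x‖ := by
    intro x hx1 hx2
    have h1 : ‖x‖ - ‖min 1 (2 - ‖x‖) • K x‖ ≤ ‖H x‖ := norm_sub_norm_le _ _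
    rw [min_eq_right (by linarith), norm_smul, Real.norm_of_nonneg (by linarith)] at h1
    nlinarith [hK1 x, norm_nonneg (K x)]
  have hHne : ∀ x ∈ closedBall (0 : Fin n → ℝ) 2, 0 < ‖H x‖ := by
    intro x hx
    have hx2 : ‖x‖ ≤ 2 := by simpa using hx
    rcases le_or_gt ‖x‖ 1 with h | h
    · rw [norm_pos_iff]
      have hx1 : x ∈ closedBall (0 : Fin n → ℝ) 1 := by simpa using h
      simp only [hHdef, hKdef]
      rw [min_eq_left (by linarith), one_smul, clamp_of_mem hx1]
      exact sub_ne_zero.2 (hno x hx1).symm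
    · linarith [hHfar x h.le hx2]
  obtain ⟨δ, hδ, hHδ⟩ : ∃ δ > 0, ∀ x ∈ closedBall (0 : Fin n → ℝ) 2, δ ≤ ‖H x‖ := by
    obtain ⟨x₀, hx₀, hmin⟩ := (isCompact_closedBall (0 : Fin n → ℝ) 2).exists_isMinOn
      ⟨0, by simp⟩ hH.continuous.norm.continuousOn
    exact ⟨_, hHne x₀ hx₀, fun x hx => hmin hx⟩
  obtain ⟨Λ, hΛ2, hΛδ⟩ : ∃ Λ : ℝ, 2 ≤ Λ ∧ 4 ≤ Λ * δ :=
    ⟨max 2 (4 / δ), le_max_left _ _, by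
      rw [← div_le_iff₀ hδ]; exact le_max_right _ _⟩
  -- `G` pushes the nonvanishing field `H` out to the sphere of radius `2`; the factor equals `1` on
  -- that sphere, so that `G` is the identity there
  set G : (Fin n → ℝ) → Fin n → ℝ := fun x => clamp 0 2 ((1 + Λ * (2 - ‖x‖)) • H x) with hGdef
  have hG : LocallyLipschitz G := by
    refine (lipschitzWith_clamp 0 2).locallyLipschitz.comp (locallyLipschitz_smul ?_ hH)
    exact (LocallyLipschitz.const 1).add
      (locallyLipschitz_smul (LocallyLipschitz.const Λ) hs)
  have hGnorm : ∀ x ∈ closedBall (0 : Fin n → ℝ) 2, ‖G x‖ = 2 := by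
    intro x hx
    have hx2 : ‖x‖ ≤ 2 := by simpa using hx
    refine norm_clamp_zero_of_le two_pos ?_
    rw [norm_smul, Real.norm_of_nonneg (by nlinarith)]
    rcases le_or_gt ‖x‖ (3 / 2) with h | h
    · have h3 : Λ / 2 ≤ 1 + Λ * (2 - ‖x‖) := by nlinarith
      have h4 := mul_le_mul h3 (hHδ x hx) hδ.le (by linarith)
      linarith
    · have := hHfar x (by linarith) hx2
      have h3 : (1 + Λ * (2 - ‖x‖)) * (2 * ‖x‖ - 2) ≤ (1 + Λ * (2 - ‖x‖)) * ‖H x‖ := by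
        gcongr
      nlinarith [mul_nonneg (sub_nonneg.2 hx2) (sub_nonneg.2 h.le)]
  have hGid : ∀ x, ‖x‖ = 2 → G x = x := by
    intro x hx
    simp only [hGdef, hHdef, hx]
    simp only [sub_self, mul_zero, add_zero, one_smul]
    rw [min_eq_right zero_le_one, zero_smul, sub_zero]
    exact clamp_of_mem (by simp [hx])
  obtain ⟨c', hc'⟩ := (hG.sub LocallyLipschitz.id).locallyLipschitzOn
    (s := closedBall 0 2) |>.exists_lipschitzOnWith_of_compact (isCompact_closedBall _ _)
  have hU : LipschitzWith (c' * 1) fun x => G (clamp 0 2 x) - clamp 0 2 x := by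
    have := hc'.comp (lipschitzWith_clamp (0 : Fin n → ℝ) 2).lipschitzOnWith (s := univ)
      fun x _ => clamp_mem 0 zero_le_two x
    simpa [lipschitzOnWith_univ, Function.comp_def] using this
  refine no_lipschitz_retraction hU two_pos (fun x hx => ?_) (fun x hx => ?_)
  · rw [hGid _ (norm_clamp_zero_of_le two_pos hx), sub_self]
  · have hxB : x ∈ closedBall (0 : Fin n → ℝ) 2 := by simpa using hx.le
    rw [clamp_of_mem hxB, add_sub_cancel, hGnorm x hxB]

/-- Brouwer's fixed point theorem for Lipschitz self-maps of a cube. -/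
theorem brouwer_lipschitz {n : ℕ} {k : (Fin n → ℝ) → Fin n → ℝ} {c : NNReal}
    {p : Fin n → ℝ} {δ : ℝ} (hδ : 0 < δ)
    (hk : LipschitzOnWith c k (closedBall p δ)) (hmaps : MapsTo k (closedBall p δ) (closedBall p δ)) :
    ∃ x ∈ closedBall p δ, k x = x := by
  have hin : ∀ x ∈ closedBall (0 : Fin n → ℝ) 1, p + δ • x ∈ closedBall p δ := by
    intro x hx
    have : ‖x‖ ≤ 1 := by simpa using hx
    rw [mem_closedBall, dist_eq_norm, add_sub_cancel_left, norm_smul, Real.norm_of_nonneg hδ.le]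
    nlinarith
  obtain ⟨x, hx, hfix⟩ := brouwer_unit_cube (n := n) (c := c)
    (k := fun x => δ⁻¹ • (k (p + δ • x) - p))
    (by
      refine LipschitzOnWith.of_dist_le_mul fun x hx y hy => ?_
      have := hk.dist_le_mul _ (hin x hx) _ (hin y hy)
      rw [dist_add_left, dist_smul₀, Real.norm_of_nonneg hδ.le] at this
      rw [dist_smul₀, dist_sub_right, Real.norm_of_nonneg (inv_nonneg.2 hδ.le),
        inv_mul_le_iff₀ hδ]
      linarith)
    (by
      intro x hx
      have := hmaps (hin x hx)
      rw [mem_closedBall, dist_eq_norm] at this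
      rw [mem_closedBall_zero_iff, norm_smul, Real.norm_of_nonneg (inv_nonneg.2 hδ.le),
        inv_mul_le_iff₀ hδ]
      linarith)
  refine ⟨p + δ • x, hin x hx, ?_⟩
  rw [inv_smul_eq_iff₀ hδ.ne'] at hfix
  exact sub_eq_iff_eq_add'.1 hfix

/-! ### Zeros of perturbed maps -/

/-- A nondegenerate zero `p` of `F` survives perturbation: a Lipschitz map that is `C ε`-close to `F`
has a zero within `D ε` of `p`. No closeness of derivatives is assumed, and no Lipschitz constant
enters `D` or `ε₂`; the zero is a Brouwer fixed point of `z ↦ z - A⁻¹ (Q z)` on a cube of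
radius `D ε`. -/
theorem exists_zero_of_perturbation {n : ℕ} {F : (Fin n → ℝ) → Fin n → ℝ} {p : Fin n → ℝ}
    {A : (Fin n → ℝ) →L[ℝ] (Fin n → ℝ)} (hF : HasFDerivAt F A p) (hFp : F p = 0)
    (hA : A.det ≠ 0) {ρ C : ℝ} (hρ : 0 < ρ) (hC : 0 ≤ C) :
    ∃ D > 0, ∃ ε₂ > 0, ∀ ε, 0 < ε → ε < ε₂ → ∀ (Q : (Fin n → ℝ) → Fin n → ℝ) (c : NNReal),
      LipschitzOnWith c Q (closedBall p ρ) → (∀ z ∈ closedBall p ρ, ‖Q z - F z‖ ≤ C * ε) →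
      ∃ z ∈ closedBall p ρ, ‖z - p‖ ≤ D * ε ∧ Q z = 0 := by
  set e := A.toContinuousLinearEquivOfDetNeZero hA with he
  have heA : ∀ x, e x = A x := fun x => rfl
  set B : (Fin n → ℝ) →L[ℝ] (Fin n → ℝ) := (e.symm : (Fin n → ℝ) →L[ℝ] (Fin n → ℝ)) with hB
  have hBA : ∀ x, B (A x) = x := fun x => by rw [← heA]; exact e.symm_apply_apply x
  have hBinj : ∀ y, B y = 0 → y = 0 := fun y hy => e.symm.map_eq_zero_iff.1 hy
  set κ := ‖B‖ with hκ
  have hκ0 : 0 ≤ κ := norm_nonneg _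
  obtain ⟨δ₀, hδ₀, hlin⟩ : ∃ δ₀ > 0, ∀ z, ‖z - p‖ < δ₀ →
      ‖F z - A (z - p)‖ ≤ (1 / (2 * (κ + 1))) * ‖z - p‖ := by
    have h := hF.isLittleO.def (c := 1 / (2 * (κ + 1))) (by positivity)
    obtain ⟨δ₀, hδ₀, h⟩ := Metric.eventually_nhds_iff.1 h
    refine ⟨δ₀, hδ₀, fun z hz => ?_⟩
    have := h (y := z) (by rwa [dist_eq_norm])
    simpa [hFp] using this
  set D := 2 * κ * C + 1 with hD
  have hD0 : 0 < D := by positivity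
  refine ⟨D, hD0, min δ₀ ρ / D, by positivity, fun ε hε hε2 Q c hQ hQF => ?_⟩
  have hDε : D * ε < min δ₀ ρ := by rw [lt_div_iff₀ hD0] at hε2; linarith
  have hsub : closedBall p (D * ε) ⊆ closedBall p ρ :=
    closedBall_subset_closedBall (hDε.le.trans (min_le_right _ _))
  obtain ⟨z, hz, hfix⟩ := brouwer_lipschitz (p := p) (δ := D * ε) (by positivity)
    (k := fun z => z - B (Q z)) (c := 1 + ‖B‖₊ * c)
    (LipschitzWith.id.lipschitzOnWith.sub (B.lipschitz.comp_lipschitzOnWith (hQ.mono hsub)))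
    (by
      intro z hz
      have hzp : ‖z - p‖ ≤ D * ε := by rw [← dist_eq_norm]; exact hz
      rw [mem_closedBall, dist_eq_norm]
      have hid : z - B (Q z) - p = - (B ((F z - A (z - p)) + (Q z - F z))) := by
        have : (F z - A (z - p)) + (Q z - F z) = Q z - A (z - p) := by abel
        rw [this, map_sub, hBA]; abel
      rw [hid, norm_neg]
      have h1 := hlin z (hzp.trans_lt (hDε.trans_le (min_le_left _ _)))
      have h2 := hQF z (hsub hz)
      have h3 : 1 / (2 * (κ + 1)) * ‖z - p‖ ≤ 1 / (2 * (κ + 1)) * (D * ε) := by gcongr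
      have h4 : κ * (1 / (2 * (κ + 1))) ≤ 1 / 2 := by
        rw [mul_one_div, div_le_div_iff₀ (by positivity) two_pos]; linarith
      calc ‖B ((F z - A (z - p)) + (Q z - F z))‖
          ≤ κ * ‖(F z - A (z - p)) + (Q z - F z)‖ := B.le_opNorm _
        _ ≤ κ * (1 / (2 * (κ + 1)) * (D * ε) + C * ε) := by
            gcongr
            exact (norm_add_le _ _).trans (add_le_add (h1.trans h3) h2)
        _ = κ * (1 / (2 * (κ + 1))) * (D * ε) + κ * C * ε := by ring
        _ ≤ 1 / 2 * (D * ε) + κ * C * ε := by gcongr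
        _ ≤ D * ε := by rw [hD]; nlinarith)
  refine ⟨z, hsub hz, by rw [← dist_eq_norm]; exact hz, hBinj _ ?_⟩
  simpa using hfix

/-! ### Regularity of the field and the flow -/

/-- First-order Taylor estimate for a function with Lipschitz derivative. -/
theorem norm_sub_sub_fderiv_le {E F : Type*} [NormedAddCommGroup E] [NormedSpace ℝ E]
    [NormedAddCommGroup F] [NormedSpace ℝ F] {f : E → F} {s : Set E} (hs : Convex ℝ s)
    (hd : ∀ x ∈ s, DifferentiableAt ℝ f x) {L : NNReal} (hL : LipschitzOnWith L (fderiv ℝ f) s)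
    {x y : E} (hx : x ∈ s) (hy : y ∈ s) :
    ‖f y - f x - fderiv ℝ f x (y - x)‖ ≤ L * ‖y - x‖ ^ 2 := by
  have hseg : segment ℝ x y ⊆ s := hs.segment_subset hx hy
  have := Convex.norm_image_sub_le_of_norm_hasFDerivWithin_le' (f := f) (f' := fderiv ℝ f)
    (φ := fderiv ℝ f x) (C := L * ‖y - x‖) (s := segment ℝ x y)
    (fun z hz => (hd z (hseg hz)).hasFDerivAt.hasFDerivWithinAt)
    (fun z hz => (hL.norm_sub_le (hseg hz) hx).trans (by
      gcongr
      exact norm_sub_le_of_mem_segment hz))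
    (convex_segment x y) (left_mem_segment ℝ x y) (right_mem_segment ℝ x y)
  calc _ ≤ _ := this
    _ = _ := by ring

/-- The derivative in `x` inherits continuity in `t`: the difference quotients are continuous in `t` and
converge uniformly in `t`, because the derivative is Lipschitz in `x` uniformly in `t`. -/
theorem continuous_fderiv_time {n : ℕ} {Ω : Set (Fin n → ℝ)} (hΩ : IsOpen Ω)
    {f : ℝ → (Fin n → ℝ) → Fin n → ℝ} (hfd : ∀ t, ∀ x ∈ Ω, DifferentiableAt ℝ (f t) x)
    {L : NNReal} (hL : ∀ t, LipschitzOnWith L (fderiv ℝ (f t)) Ω)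
    (hfc : ∀ x ∈ Ω, Continuous fun t => f t x) {x : Fin n → ℝ} (hx : x ∈ Ω) :
    Continuous fun t => fderiv ℝ (f t) x := by
  rw [continuous_clm_apply]
  intro v
  obtain ⟨r, hr, hball⟩ := Metric.isOpen_iff.1 hΩ x hx
  refine continuous_of_uniform_approx_of_continuous fun u hu => ?_
  obtain ⟨η, hη, hηu⟩ := Metric.mem_uniformity_dist.1 hu
  obtain ⟨h, hh, hhr, hhη⟩ : ∃ h > 0, h * ‖v‖ < r ∧ L * h * ‖v‖ ^ 2 < η := by
    have h1 : Filter.Tendsto (fun h : ℝ => h * ‖v‖) (nhdsWithin 0 (Ioi 0)) (nhds 0) := by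
      have : Continuous fun h : ℝ => h * ‖v‖ := by fun_prop
      simpa using this.continuousAt.tendsto.mono_left (nhdsWithin_le_nhds (a := (0:ℝ)) (s := Ioi 0))
    have h2 : Filter.Tendsto (fun h : ℝ => L * h * ‖v‖ ^ 2) (nhdsWithin 0 (Ioi 0)) (nhds 0) := by
      have : Continuous fun h : ℝ => L * h * ‖v‖ ^ 2 := by fun_prop
      simpa using this.continuousAt.tendsto.mono_left (nhdsWithin_le_nhds (a := (0:ℝ)) (s := Ioi 0))
    obtain ⟨h, ha, hb, hc⟩ := ((h1.eventually (gt_mem_nhds hr)).and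
      ((h2.eventually (gt_mem_nhds hη)).and self_mem_nhdsWithin)).exists
    exact ⟨h, hc, ha, hb⟩
  have hmem : x + h • v ∈ ball x r := by
    rw [mem_ball, dist_eq_norm, add_sub_cancel_left, norm_smul, Real.norm_of_nonneg hh.le]
    exact hhr
  refine ⟨fun t => h⁻¹ • (f t (x + h • v) - f t x),
    by have h1 := hfc _ (hball hmem); have h2 := hfc _ hx; fun_prop, fun t => hηu ?_⟩
  have hT := norm_sub_sub_fderiv_le (convex_ball x r) (fun y hy => hfd t y (hball hy))
    ((hL t).mono hball) (mem_ball_self hr) hmem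
  have hid : h⁻¹ • (f t (x + h • v) - f t x) - fderiv ℝ (f t) x v
      = h⁻¹ • (f t (x + h • v) - f t x - fderiv ℝ (f t) x (x + h • v - x)) := by
    rw [add_sub_cancel_left, map_smul, smul_sub h⁻¹ (f t (x + h • v) - f t x), smul_smul,
      inv_mul_cancel₀ hh.ne', one_smul]
  rw [dist_comm, dist_eq_norm, hid, norm_smul, Real.norm_of_nonneg (inv_nonneg.2 hh.le),
    inv_mul_lt_iff₀ hh]
  refine hT.trans_lt ?_
  rw [add_sub_cancel_left, norm_smul, Real.norm_of_nonneg hh.le]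
  nlinarith

/-- A bounded Lipschitz field on the cube of radius `2ρ` has solutions up to time `T` from every point of
the cube of radius `ρ`, provided that they cannot travel further than `ρ`; the time-`T` map is
Lipschitz. Picard–Lindelöf is applied to the field precomposed with `clamp`. -/
theorem exists_flow {n : ℕ} {V : ℝ → (Fin n → ℝ) → Fin n → ℝ} {p : Fin n → ℝ} {ρ T C : ℝ}
    {K : NNReal} (hρ : 0 < ρ) (hT : 0 < T) (hC : 0 ≤ C) (hCT : C * T ≤ ρ)
    (hlip : ∀ t ∈ Icc 0 T, LipschitzOnWith K (V t) (closedBall p (2 * ρ)))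
    (hcont : ∀ x ∈ closedBall p (2 * ρ), ContinuousOn (fun t => V t x) (Icc 0 T))
    (hbd : ∀ t ∈ Icc 0 T, ∀ x ∈ closedBall p (2 * ρ), ‖V t x‖ ≤ C) :
    ∃ (α : (Fin n → ℝ) → ℝ → Fin n → ℝ) (L' : NNReal),
      (∀ x ∈ closedBall p ρ, α x 0 = x ∧ ∀ t ∈ Icc 0 T, α x t ∈ closedBall p (2 * ρ) ∧
        HasDerivWithinAt (α x) (V t (α x t)) (Icc 0 T) t) ∧
      LipschitzOnWith L' (fun x => α x T) (closedBall p ρ) := by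
  have hcl : ∀ x, clamp p (2 * ρ) x ∈ closedBall p (2 * ρ) := clamp_mem p (by positivity)
  have hPL : IsPicardLindelof (fun t x => V t (clamp p (2 * ρ) x))
      (⟨0, le_rfl, hT.le⟩ : Icc 0 T) p (2 * ρ).toNNReal ρ.toNNReal C.toNNReal (K * 1) := by
    refine ⟨fun t ht => ?_, fun x _ => hcont _ (hcl x), fun t ht x _ => ?_, ?_⟩
    · exact (hlip t ht).comp (lipschitzWith_clamp p (2 * ρ)).lipschitzOnWith fun x _ => hcl x
    · rw [Real.coe_toNNReal _ hC]; exact hbd t ht _ (hcl x)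
    · rw [Real.coe_toNNReal _ hC, Real.coe_toNNReal _ hρ.le,
        Real.coe_toNNReal _ (by positivity : 0 ≤ 2 * ρ)]
      simp only [sub_zero, sub_self]
      rw [max_eq_left hT.le]; linarith
  obtain ⟨α, hα, L', hL'⟩ :=
    hPL.exists_forall_mem_closedBall_eq_hasDerivWithinAt_lipschitzOnWith
  rw [Real.coe_toNNReal _ hρ.le] at hα hL'
  refine ⟨α, L', fun x hx => ⟨(hα x hx).1, ?_⟩, hL' T ⟨hT.le, le_rfl⟩⟩
  obtain ⟨h0, hder⟩ := hα x hx
  -- the speed bound keeps the solution inside the cube, where the clamp is the identity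
  have hmem : ∀ t ∈ Icc 0 T, α x t ∈ closedBall p (2 * ρ) := by
    intro t ht
    have h := norm_image_sub_le_of_norm_deriv_le_segment' hder
      (fun s hs => hbd s (Ico_subset_Icc_self hs) _ (hcl _)) t ht
    simp only at h0
    rw [h0, sub_zero, ← dist_eq_norm] at h
    have h2 : C * t ≤ C * T := mul_le_mul_of_nonneg_left ht.2 hC
    have h3 := mem_closedBall.1 hx
    rw [mem_closedBall]
    linarith [dist_triangle (α x t) x p]
  intro t ht
  refine ⟨hmem t ht, ?_⟩
  have := hder t ht
  rwa [clamp_of_mem (hmem t ht)] at this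

/-! ### The displacement to second order -/

/-- Expansion of the time-`T` displacement of a solution through `z`, when `f` has zero mean at `z`:
it is `ε² ∫ (A y¹ + g)` up to `O(ε³)`, with an explicit constant. The bounds on `x - z` and on
`x - z - ε y¹` are bootstrapped by the mean value inequality. Here `A t` plays the role of
`∂f/∂x (t, z)` and `w t` that of `R (t, x t, ε)`. -/
theorem displacement_estimate {E : Type*} [NormedAddCommGroup E] [NormedSpace ℝ E]
    [CompleteSpace E] {T M M₁ L ε : ℝ} (hT : 0 < T) (hM : 0 ≤ M) (hM₁ : 0 ≤ M₁) (hL : 0 ≤ L)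
    (hε : 0 < ε) (hε1 : ε ≤ 1) {z : E} {x : ℝ → E} {f g : ℝ → E → E} {w : ℝ → E} {A : ℝ → E →L[ℝ] E}
    (hfc : Continuous fun t => f t z) (hgc : Continuous fun t => g t z) (hAc : Continuous A)
    (hf : ∀ t ∈ Icc 0 T, ‖f t (x t)‖ ≤ M) (hg : ∀ t ∈ Icc 0 T, ‖g t (x t)‖ ≤ M)
    (hw : ∀ t ∈ Icc 0 T, ‖w t‖ ≤ M) (hA : ∀ t ∈ Icc 0 T, ‖A t‖ ≤ M₁)
    (hf1 : ∀ t ∈ Icc 0 T, ‖f t (x t) - f t z‖ ≤ M₁ * ‖x t - z‖)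
    (hf2 : ∀ t ∈ Icc 0 T, ‖f t (x t) - f t z - A t (x t - z)‖ ≤ L * ‖x t - z‖ ^ 2)
    (hg1 : ∀ t ∈ Icc 0 T, ‖g t (x t) - g t z‖ ≤ L * ‖x t - z‖)
    (hx0 : x 0 = z)
    (hx : ∀ t ∈ Icc 0 T, HasDerivWithinAt x
      (ε • f t (x t) + ε ^ 2 • g t (x t) + ε ^ 3 • w t) (Icc 0 T) t)
    (hmean : ∫ t in (0 : ℝ)..T, f t z = 0) :
    ‖x T - z - ε ^ 2 • ∫ t in (0 : ℝ)..T, (A t (∫ s in (0 : ℝ)..t, f s z) + g t z)‖ ≤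
      (L * (3 * M * T) ^ 2 + M₁ * ((M₁ * (3 * M * T) + 2 * M) * T) + L * (3 * M * T) + M) * T
        * ε ^ 3 := by
  have h0T : (0 : ℝ) ∈ Icc 0 T := ⟨le_rfl, hT.le⟩
  have hε2 : ε ^ 2 ≤ ε := by nlinarith
  have hε3 : ε ^ 3 ≤ ε ^ 2 := by nlinarith [sq_nonneg ε]
  set a := 3 * M * T with ha
  have ha0 : 0 ≤ a := by positivity
  set b := (M₁ * a + 2 * M) * T with hb
  set y : ℝ → E := fun t => ∫ s in (0 : ℝ)..t, f s z with hy
  have hyd : ∀ t, HasDerivAt y (f t z) t := fun t => (hfc.integral_hasStrictDerivAt 0 t).hasDerivAt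
  have hyc : Continuous y := continuous_iff_continuousAt.2 fun t => (hyd t).continuousAt
  have hhc : Continuous fun t => A t (y t) + g t z := (hAc.clm_apply hyc).add hgc
  -- zeroth order: the speed is at most `3 M ε`
  have e0 : ∀ t ∈ Icc 0 T, ‖x t - z‖ ≤ a * ε := by
    intro t ht
    have := norm_image_sub_le_of_norm_deriv_le_segment' (C := 3 * M * ε) hx (fun s hs => by
      have hs' := Ico_subset_Icc_self hs
      calc _ ≤ ‖ε • f s (x s)‖ + ‖ε ^ 2 • g s (x s)‖ + ‖ε ^ 3 • w s‖ := norm_add₃_le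
        _ = ε * ‖f s (x s)‖ + ε ^ 2 * ‖g s (x s)‖ + ε ^ 3 * ‖w s‖ := by
            simp only [norm_smul, norm_pow, Real.norm_of_nonneg hε.le]
        _ ≤ ε * M + ε * M + ε * M := by
            gcongr
            · exact hf s hs'
            · exact hg s hs'
            · exact hε3.trans hε2
            · exact hw s hs'
        _ = _ := by ring) t ht
    rw [hx0, sub_zero] at this
    refine this.trans ?_
    have : 3 * M * ε * t ≤ 3 * M * ε * T := by have := ht.2; gcongr
    rw [ha]; linarith
  -- first order: the derivative of `x - z - ε y` is `O(ε²)` by the previous bound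
  have e1 : ∀ t ∈ Icc 0 T, ‖x t - z - ε • y t‖ ≤ b * ε ^ 2 := by
    intro t ht
    have hd : ∀ s ∈ Icc 0 T, HasDerivWithinAt (fun s => x s - z - ε • y s)
        ((ε • f s (x s) + ε ^ 2 • g s (x s) + ε ^ 3 • w s) - ε • f s z) (Icc 0 T) s := fun s hs =>
      ((hx s hs).sub_const z).sub ((hyd s).const_smul ε).hasDerivWithinAt
    have := norm_image_sub_le_of_norm_deriv_le_segment' (C := (M₁ * a + 2 * M) * ε ^ 2) hd
      (fun s hs => by
      have hs' := Ico_subset_Icc_self hs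
      have hid : (ε • f s (x s) + ε ^ 2 • g s (x s) + ε ^ 3 • w s) - ε • f s z
        = ε • (f s (x s) - f s z) + ε ^ 2 • g s (x s) + ε ^ 3 • w s := by
        rw [smul_sub]; abel
      rw [hid]
      calc _ ≤ ‖ε • (f s (x s) - f s z)‖ + ‖ε ^ 2 • g s (x s)‖ + ‖ε ^ 3 • w s‖ := norm_add₃_le
        _ = ε * ‖f s (x s) - f s z‖ + ε ^ 2 * ‖g s (x s)‖ + ε ^ 3 * ‖w s‖ := by
            simp only [norm_smul, norm_pow, Real.norm_of_nonneg hε.le]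
        _ ≤ ε * (M₁ * (a * ε)) + ε ^ 2 * M + ε ^ 2 * M := by
            gcongr
            · exact (hf1 s hs').trans (by gcongr; exact e0 s hs')
            · exact hg s hs'
            · exact hw s hs'
        _ = _ := by ring) t ht
    simp only [hx0, sub_zero, sub_self] at this
    have hy0 : y 0 = 0 := by simp [hy]
    simp only [hy0, smul_zero, sub_zero] at this
    refine this.trans ?_
    have : (M₁ * a + 2 * M) * ε ^ 2 * t ≤ (M₁ * a + 2 * M) * ε ^ 2 * T := by
      have := ht.2; gcongr
    rw [hb]; linarith
  -- second order: subtract the linear part of `f` at `z`, evaluated on `x - z = ε y + O(ε²)`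
  set h : ℝ → E := fun t => ∫ s in (0 : ℝ)..t, (A s (y s) + g s z) with hh
  have hhd : ∀ t, HasDerivAt h (A t (y t) + g t z) t := fun t =>
    (hhc.integral_hasStrictDerivAt 0 t).hasDerivAt
  have hd : ∀ s ∈ Icc 0 T, HasDerivWithinAt (fun s => x s - z - ε • y s - ε ^ 2 • h s)
      ((ε • f s (x s) + ε ^ 2 • g s (x s) + ε ^ 3 • w s) - ε • f s z
        - ε ^ 2 • (A s (y s) + g s z)) (Icc 0 T) s := fun s hs =>
    (((hx s hs).sub_const z).sub ((hyd s).const_smul ε).hasDerivWithinAt).sub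
      ((hhd s).const_smul (ε ^ 2)).hasDerivWithinAt
  have := norm_image_sub_le_of_norm_deriv_le_segment'
    (C := (L * a ^ 2 + M₁ * b + L * a + M) * ε ^ 3) hd
    (fun s hs => by
      have hs' := Ico_subset_Icc_self hs
      have hid : (ε • f s (x s) + ε ^ 2 • g s (x s) + ε ^ 3 • w s) - ε • f s z
          - ε ^ 2 • (A s (y s) + g s z)
          = (ε • (f s (x s) - f s z - A s (x s - z)) + ε • A s (x s - z - ε • y s))
            + ε ^ 2 • (g s (x s) - g s z) + ε ^ 3 • w s := by
        rw [map_sub (A s) (x s - z), map_smul]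
        module
      rw [hid]
      have i1 : ‖ε • (f s (x s) - f s z - A s (x s - z))‖ ≤ ε * (L * (a * ε) ^ 2) := by
        rw [norm_smul, Real.norm_of_nonneg hε.le]
        gcongr
        refine (hf2 s hs').trans ?_
        gcongr
        exact e0 s hs'
      have i2 : ‖ε • A s (x s - z - ε • y s)‖ ≤ ε * (M₁ * (b * ε ^ 2)) := by
        rw [norm_smul, Real.norm_of_nonneg hε.le]
        gcongr
        exact ((A s).le_opNorm _).trans (mul_le_mul (hA s hs') (e1 s hs') (norm_nonneg _) hM₁)
      have i3 : ‖ε ^ 2 • (g s (x s) - g s z)‖ ≤ ε ^ 2 * (L * (a * ε)) := by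
        rw [norm_smul, norm_pow, Real.norm_of_nonneg hε.le]
        gcongr
        refine (hg1 s hs').trans ?_
        gcongr
        exact e0 s hs'
      have i4 : ‖ε ^ 3 • w s‖ ≤ ε ^ 3 * M := by
        rw [norm_smul, norm_pow, Real.norm_of_nonneg hε.le]
        gcongr
        exact hw s hs'
      refine norm_add₃_le.trans ?_
      linarith [norm_add_le (ε • (f s (x s) - f s z - A s (x s - z)))
        (ε • A s (x s - z - ε • y s))]) T ⟨hT.le, le_rfl⟩
  have hy0 : y 0 = 0 := by simp [hy]
  have hyT : y T = 0 := hmean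
  have hh0 : h 0 = 0 := by simp [hh]
  simp only [hx0, sub_zero, sub_self, hy0, hyT, hh0, smul_zero] at this
  calc _ ≤ _ := this
    _ = _ := by ring

/-! ### Periodic extension -/

/-- A solution of a `T`-periodic equation on `[0, T]` with equal end values extends to a `T`-periodic
solution on the whole line. -/
theorem exists_periodic_extension {E : Type*} [NormedAddCommGroup E] [NormedSpace ℝ E]
    {T : ℝ} (hT : 0 < T) {V : ℝ → E → E} (hV : ∀ t y, V (t + T) y = V t y) {x : ℝ → E}
    (hx : ∀ t ∈ Icc 0 T, HasDerivWithinAt x (V t (x t)) (Icc 0 T) t) (hxT : x T = x 0) :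
    ∃ φ : ℝ → E, φ 0 = x 0 ∧ (∀ t, ∃ s ∈ Icc 0 T, φ t = x s) ∧
      (∀ t, HasDerivAt φ (V t (φ t)) t) ∧ ∀ t, φ (t + T) = φ t := by
  set φ : ℝ → E := fun t => x (toIcoMod hT 0 t) with hφ
  have hmem : ∀ t, toIcoMod hT 0 t ∈ Ico 0 T := fun t => by
    simpa using toIcoMod_mem_Ico hT 0 t
  have hVz : ∀ (m : ℤ) t y, V (t - m • T) y = V t y := by
    intro m t y
    have : Function.Periodic (fun t => V t y) T := fun t => hV t y
    exact this.sub_zsmul_eq m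
  -- on each closed period the extension is a translate of `x`
  have hkey : ∀ (m : ℤ) u, u - m • T ∈ Icc 0 T → φ u = x (u - m • T) := by
    intro m u hu
    rcases eq_or_lt_of_le hu.2 with h | h
    · have : toIcoMod hT 0 u = 0 := by
        rw [← toIcoMod_sub_zsmul hT 0 u m, h]
        simpa using toIcoMod_add_right hT 0 0
      simp only [hφ]
      rw [this, h, hxT]
    · simp only [hφ]
      rw [← toIcoMod_sub_zsmul hT 0 u m]
      rw [(toIcoMod_eq_self hT).2 (by rw [zero_add]; exact ⟨hu.1, h⟩)]
  have hder : ∀ (m : ℤ) u, u - m • T ∈ Icc 0 T →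
      HasDerivWithinAt φ (V u (φ u)) (Icc (m • T) (m • T + T)) u := by
    intro m u hu
    have h1 := hx _ hu
    have h2 : HasDerivWithinAt (fun u => x (u - m • T)) (V (u - m • T) (x (u - m • T)))
        (Icc (m • T) (m • T + T)) u := by
      have := h1.scomp u ((hasDerivAt_id u).sub_const (m • T)).hasDerivWithinAt
        (s := Icc (m • T) (m • T + T)) (fun v hv => by
          simp only [id, mem_Icc] at hv ⊢; constructor <;> linarith [hv.1, hv.2])
      simpa [Function.comp_def] using this
    rw [hVz, ← hkey m u hu] at h2
    refine h2.congr (fun v hv => hkey m v ?_) (hkey m u hu)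
    constructor <;> linarith [hv.1, hv.2]
  refine ⟨φ, ?_, fun t => ⟨_, Ico_subset_Icc_self (hmem t), rfl⟩, fun t => ?_, fun t => ?_⟩
  · simpa using hkey 0 0 (by simpa using hT.le)
  · have hdiv : t - toIcoDiv hT 0 t • T = toIcoMod hT 0 t := rfl
    have hm := hmem t
    set m := toIcoDiv hT 0 t
    rw [← hdiv] at hm
    rcases eq_or_lt_of_le hm.1 with h | h
    · have h1 := hder m t (Ico_subset_Icc_self hm)
      have hm1 : (m - 1) • T = m • T - T := by rw [sub_smul, one_smul]
      have h2 := hder (m - 1) t (by rw [hm1]; constructor <;> linarith)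
      refine (h2.union h1).hasDerivAt ?_
      rw [hm1, sub_add_cancel, Icc_union_Icc_eq_Icc (by linarith) (by linarith)]
      exact Icc_mem_nhds (by linarith) (by linarith)
    · refine (hder m t (Ico_subset_Icc_self hm)).hasDerivAt ?_
      exact Icc_mem_nhds (by linarith) (by linarith [hm.2])
  · simp only [hφ, toIcoMod_add_right]

/-! ### Bounds and differentiability -/

theorem exists_norm_bound {n : ℕ} {Ω : Set (Fin n → ℝ)} {h : ℝ → (Fin n → ℝ) → Fin n → ℝ}
    (hc : ContinuousOn (fun q : ℝ × (Fin n → ℝ) => h q.1 q.2) (univ ×ˢ Ω)) (T : ℝ)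
    {p : Fin n → ℝ} {r : ℝ} (hr : closedBall p r ⊆ Ω) :
    ∃ M, ∀ t ∈ Icc 0 T, ∀ x ∈ closedBall p r, ‖h t x‖ ≤ M := by
  obtain ⟨M, hM⟩ := ((isCompact_Icc (a := (0 : ℝ)) (b := T)).prod
    (isCompact_closedBall p r)).exists_bound_of_continuousOn
      (hc.mono (prod_mono (subset_univ _) hr))
  exact ⟨M, fun t ht x hx => hM (t, x) ⟨ht, hx⟩⟩

/-- A nonzero Jacobian determinant forces differentiability: the junk value of `fderiv` is the zero map,
whose determinant vanishes except in dimension `0`, where every map is differentiable. -/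
theorem hasFDerivAt_of_det_ne_zero {n : ℕ} {F : (Fin n → ℝ) → Fin n → ℝ} {p : Fin n → ℝ}
    (h : (fderiv ℝ F p).det ≠ 0) : HasFDerivAt F (fderiv ℝ F p) p := by
  by_cases hd : DifferentiableAt ℝ F p
  · exact hd.hasFDerivAt
  rcases subsingleton_or_nontrivial (Fin n → ℝ) with hs | hs
  · exact absurd (hasFDerivAt_of_subsingleton F p).differentiableAt hd
  · rw [fderiv_zero_of_not_differentiableAt hd] at h
    refine absurd ?_ h
    have : Module.finrank ℝ (Fin n → ℝ) ≠ 0 := Module.finrank_pos.ne'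
    exact LinearMap.det_zero'' (R := ℝ) (M := Fin n → ℝ)

end SecondOrderAveraging

end

/-! ### The averaging theorem -/

open SecondOrderAveraging in
/-- **Second-order averaging theorem.** Let `Ω ⊆ ℝⁿ` be open, `T > 0`, `ε₀ > 0`, and let
`f(t,x)`, `g(t,x)` and `R(t,x,ε)` be `T`-periodic in `t`, with `∂f/∂x` Lipschitz in `x`,
`g` and `R` Lipschitz in `x`, all continuous, and `‖R‖` uniformly bounded. Set
`f⁰(y) = (1/T)∫₀ᵀ f(t,y) dt`, `y¹(t,x) = ∫₀ᵗ f(s,x) ds`,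
`f¹(t,x) = (∂f/∂x)(t,x)·y¹(t,x)`, and let `f¹⁰`, `g⁰` be the averages of `f¹`, `g`.
Suppose `f⁰ ≡ 0` on `Ω` and `p ∈ Ω` satisfies `f¹⁰(p) + g⁰(p) = 0` with
`det(∂(f¹⁰+g⁰)/∂y (p)) ≠ 0`. Then there is `ε₁ ∈ (0, ε₀]` such that for every
`ε ∈ (0, ε₁)` the equation `ẋ = εf(t,x) + ε²g(t,x) + ε³R(t,x,ε)` has a `T`-periodic
solution `φ(·,ε)` in `Ω`, with `φ(0,ε) → p` as `ε → 0`. -/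
theorem second_order_averaging {n : ℕ} (Ω : Set (Fin n → ℝ)) (hΩ : IsOpen Ω)
    (T ε₀ : ℝ) (hT : 0 < T) (hε₀ : 0 < ε₀)
    (f g : ℝ → (Fin n → ℝ) → Fin n → ℝ)
    (R : ℝ → (Fin n → ℝ) → ℝ → Fin n → ℝ)
    (hfper : ∀ t x, f (t + T) x = f t x)
    (hgper : ∀ t x, g (t + T) x = g t x)
    (hRper : ∀ t x ε, R (t + T) x ε = R t x ε)
    (hfd : ∀ t, ∀ x ∈ Ω, DifferentiableAt ℝ (f t) x)
    (hflip : ∃ L : NNReal, ∀ t, LipschitzOnWith L (fderiv ℝ (f t)) Ω)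
    (hglip : ∃ L : NNReal, ∀ t, LipschitzOnWith L (g t) Ω)
    (hRlip : ∃ L : NNReal, ∀ t, ∀ ε ∈ Set.Ioc (0 : ℝ) ε₀,
      LipschitzOnWith L (fun x => R t x ε) Ω)
    (hfc : ContinuousOn (fun q : ℝ × (Fin n → ℝ) => f q.1 q.2) (Set.univ ×ˢ Ω))
    (hgc : ContinuousOn (fun q : ℝ × (Fin n → ℝ) => g q.1 q.2) (Set.univ ×ˢ Ω))
    (hRc : ∀ ε ∈ Set.Ioc (0 : ℝ) ε₀,
      ContinuousOn (fun q : ℝ × (Fin n → ℝ) => R q.1 q.2 ε) (Set.univ ×ˢ Ω))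
    (hRbound : ∃ C : ℝ, ∀ t : ℝ, ∀ x ∈ Ω, ∀ ε ∈ Set.Ioc (0 : ℝ) ε₀, ‖R t x ε‖ ≤ C)
    (f0 f10 g0 : (Fin n → ℝ) → Fin n → ℝ)
    (y1 : ℝ → (Fin n → ℝ) → Fin n → ℝ)
    (hf0 : ∀ y, f0 y = (1 / T) • ∫ t in (0 : ℝ)..T, f t y)
    (hy1 : ∀ t x, y1 t x = ∫ s in (0 : ℝ)..t, f s x)
    (hf10 : ∀ y, f10 y = (1 / T) • ∫ t in (0 : ℝ)..T, (fderiv ℝ (f t) y) (y1 t y))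
    (hg0 : ∀ y, g0 y = (1 / T) • ∫ t in (0 : ℝ)..T, g t y)
    (hf0zero : ∀ y ∈ Ω, f0 y = 0)
    (p : Fin n → ℝ) (hp : p ∈ Ω) (hp0 : f10 p + g0 p = 0)
    (hdet : (fderiv ℝ (fun y => f10 y + g0 y) p).det ≠ 0) :
    ∃ ε₁ : ℝ, 0 < ε₁ ∧ ε₁ ≤ ε₀ ∧ ∃ φ : ℝ → ℝ → Fin n → ℝ,
      (∀ ε : ℝ, 0 < ε → ε < ε₁ →
        (∀ t, φ ε t ∈ Ω) ∧
        (∀ t, HasDerivAt (φ ε)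
          (ε • f t (φ ε t) + ε ^ 2 • g t (φ ε t) + ε ^ 3 • R t (φ ε t) ε) t) ∧
        (∀ t, φ ε (t + T) = φ ε t)) ∧
      Filter.Tendsto (fun ε => φ ε 0) (nhdsWithin 0 (Set.Ioi 0)) (nhds p) := by
  obtain ⟨Lf, hLf⟩ := hflip
  obtain ⟨Lg, hLg⟩ := hglip
  obtain ⟨LR, hLR⟩ := hRlip
  obtain ⟨CR, hCR⟩ := hRbound
  have hft : ∀ x ∈ Ω, Continuous fun t => f t x := fun x hx =>
    hfc.comp_continuous (f := fun t : ℝ => (t, x)) (by fun_prop) fun t => ⟨trivial, hx⟩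
  have hgt : ∀ x ∈ Ω, Continuous fun t => g t x := fun x hx =>
    hgc.comp_continuous (f := fun t : ℝ => (t, x)) (by fun_prop) fun t => ⟨trivial, hx⟩
  have hRt : ∀ ε ∈ Set.Ioc (0 : ℝ) ε₀, ∀ x ∈ Ω, Continuous fun t => R t x ε := fun ε hε x hx =>
    (hRc ε hε).comp_continuous (f := fun t : ℝ => (t, x)) (by fun_prop) fun t => ⟨trivial, hx⟩
  have hdft : ∀ x ∈ Ω, Continuous fun t => fderiv ℝ (f t) x := fun x hx =>
    continuous_fderiv_time hΩ hfd hLf hft hx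
  obtain ⟨ρ, hρ, hρΩ⟩ : ∃ ρ > 0, Metric.closedBall p (2 * ρ) ⊆ Ω := by
    obtain ⟨r, hr, hb⟩ := Metric.isOpen_iff.1 hΩ p hp
    exact ⟨r / 3, by positivity,
      (Metric.closedBall_subset_ball (by linarith)).trans hb⟩
  set B := Metric.closedBall p (2 * ρ) with hB
  have hBconv : Convex ℝ B := convex_closedBall _ _
  have hpB : p ∈ B := Metric.mem_closedBall_self (by positivity)
  have hsubB : Metric.closedBall p ρ ⊆ B := Metric.closedBall_subset_closedBall (by linarith)
  obtain ⟨Mf, hMf⟩ := exists_norm_bound hfc T hρΩ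
  obtain ⟨Mg, hMg⟩ := exists_norm_bound hgc T hρΩ
  obtain ⟨m, hm⟩ := (isCompact_Icc (a := (0 : ℝ)) (b := T)).exists_bound_of_continuousOn
    (hdft p hp).continuousOn
  set M := max Mf (max Mg CR) with hMdef
  have hfM : ∀ t ∈ Set.Icc 0 T, ∀ x ∈ B, ‖f t x‖ ≤ M := fun t ht x hx =>
    (hMf t ht x hx).trans (le_max_left _ _)
  have hgM : ∀ t ∈ Set.Icc 0 T, ∀ x ∈ B, ‖g t x‖ ≤ M := fun t ht x hx =>
    (hMg t ht x hx).trans ((le_max_left _ _).trans (le_max_right _ _))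
  have hRM : ∀ ε ∈ Set.Ioc (0 : ℝ) ε₀, ∀ t, ∀ x ∈ B, ‖R t x ε‖ ≤ M := fun ε hε t x hx =>
    (hCR t x (hρΩ hx) ε hε).trans ((le_max_right _ _).trans (le_max_right _ _))
  have h0T : (0 : ℝ) ∈ Set.Icc 0 T := ⟨le_rfl, hT.le⟩
  have hM0 : 0 ≤ M := (norm_nonneg _).trans (hfM 0 h0T p hpB)
  set M₁ := m + Lf * (2 * ρ) with hM₁def
  have hM₁ : ∀ t ∈ Set.Icc 0 T, ∀ x ∈ B, ‖fderiv ℝ (f t) x‖ ≤ M₁ := by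
    intro t ht x hx
    have h1 := (hLf t).norm_sub_le (hρΩ hx) hp
    have h2 : (Lf : ℝ) * ‖x - p‖ ≤ Lf * (2 * ρ) := by
      gcongr
      rw [← dist_eq_norm]; exact hx
    have h3 := norm_le_norm_add_norm_sub' (fderiv ℝ (f t) x) (fderiv ℝ (f t) p)
    linarith [hm t ht]
  have hM₁0 : 0 ≤ M₁ := (norm_nonneg _).trans (hM₁ 0 h0T p hpB)
  have hf1 : ∀ t ∈ Set.Icc 0 T, ∀ x ∈ B, ∀ y ∈ B, ‖f t y - f t x‖ ≤ M₁ * ‖y - x‖ :=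
    fun t ht x hx y hy => hBconv.norm_image_sub_le_of_norm_fderiv_le
      (fun z hz => hfd t z (hρΩ hz)) (hM₁ t ht) hx hy
  set F : (Fin n → ℝ) → Fin n → ℝ := fun y => f10 y + g0 y with hF
  have hmean : ∀ z ∈ Ω, ∫ t in (0 : ℝ)..T, f t z = 0 := by
    intro z hz
    have h := hf0zero z hz
    rw [hf0] at h
    exact (smul_eq_zero.1 h).resolve_left (by positivity)
  have hTF : ∀ z ∈ Ω, ∫ t in (0 : ℝ)..T,
      (fderiv ℝ (f t) z (∫ s in (0 : ℝ)..t, f s z) + g t z) = T • F z := by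
    intro z hz
    have hyc : Continuous fun t => ∫ s in (0 : ℝ)..t, f s z :=
      continuous_iff_continuousAt.2 fun t =>
        ((hft z hz).integral_hasStrictDerivAt 0 t).hasDerivAt.continuousAt
    rw [intervalIntegral.integral_add (((hdft z hz).clm_apply hyc).intervalIntegrable _ _)
      ((hgt z hz).intervalIntegrable _ _)]
    simp only [hF, hf10, hg0, hy1]
    rw [smul_add, smul_smul, smul_smul, mul_one_div_cancel hT.ne', one_smul, one_smul]
  set L : ℝ := Lf + Lg with hLdef
  set c₀ := L * (3 * M * T) ^ 2 + M₁ * ((M₁ * (3 * M * T) + 2 * M) * T) + L * (3 * M * T) + M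
    with hc₀
  have hL0 : 0 ≤ L := by positivity
  have hc₀0 : 0 ≤ c₀ := by positivity
  obtain ⟨D, hD, ε₂, hε₂, hzero⟩ :=
    exists_zero_of_perturbation (hasFDerivAt_of_det_ne_zero hdet) hp0 hdet hρ hc₀0
  -- the last bound ensures that solutions from the cube of radius `ρ` move by at most `ρ`
  set ε₁ := min (min 1 ε₀) (min ε₂ (ρ / (3 * M * T + 1))) with hε₁
  have hε₁0 : 0 < ε₁ := by positivity
  have hsol : ∀ ε, ∃ φ : ℝ → Fin n → ℝ, 0 < ε → ε < ε₁ →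
      ((∀ t, φ t ∈ Ω) ∧
        (∀ t, HasDerivAt φ (ε • f t (φ t) + ε ^ 2 • g t (φ t) + ε ^ 3 • R t (φ t) ε) t) ∧
        (∀ t, φ (t + T) = φ t)) ∧ ‖φ 0 - p‖ ≤ D * ε := by
    intro ε
    by_cases hcase : 0 < ε ∧ ε < ε₁
    swap
    · exact ⟨0, fun h1 h2 => absurd ⟨h1, h2⟩ hcase⟩
    obtain ⟨hε, hεlt⟩ := hcase
    have hε1 : ε ≤ 1 := hεlt.le.trans ((min_le_left _ _).trans (min_le_left _ _))
    have hεI : ε ∈ Set.Ioc 0 ε₀ :=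
      ⟨hε, hεlt.le.trans ((min_le_left _ _).trans (min_le_right _ _))⟩
    have hεε₂ : ε < ε₂ := hεlt.trans_le ((min_le_right _ _).trans (min_le_left _ _))
    have hερ : 3 * M * ε * T ≤ ρ := by
      have h := hεlt.le.trans ((min_le_right _ _).trans (min_le_right _ _))
      rw [le_div_iff₀ (by positivity)] at h
      linarith
    have hε2 : ε ^ 2 ≤ ε := by nlinarith
    have hε3 : ε ^ 3 ≤ ε := by nlinarith [sq_nonneg ε]
    have hε2' : ε ^ 2 ≤ 1 := hε2.trans hε1
    have hε3' : ε ^ 3 ≤ 1 := hε3.trans hε1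
    set V : ℝ → (Fin n → ℝ) → Fin n → ℝ :=
      fun t x => ε • f t x + ε ^ 2 • g t x + ε ^ 3 • R t x ε with hV
    have hVlip : ∀ t ∈ Set.Icc 0 T,
        LipschitzOnWith (M₁.toNNReal + Lg + LR) (V t) B := by
      intro t ht
      refine LipschitzOnWith.of_dist_le_mul fun x hx y hy => ?_
      have hid : V t x - V t y = ε • (f t x - f t y) + ε ^ 2 • (g t x - g t y)
          + ε ^ 3 • (R t x ε - R t y ε) := by
        simp only [hV]; module
      have i1 := hf1 t ht y hy x hx
      have i2 := (hLg t).norm_sub_le (hρΩ hx) (hρΩ hy)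
      have i3 := (hLR t ε hεI).norm_sub_le (hρΩ hx) (hρΩ hy)
      rw [dist_eq_norm, dist_eq_norm, hid]
      calc _ ≤ ‖ε • (f t x - f t y)‖ + ‖ε ^ 2 • (g t x - g t y)‖
            + ‖ε ^ 3 • (R t x ε - R t y ε)‖ := norm_add₃_le
        _ = ε * ‖f t x - f t y‖ + ε ^ 2 * ‖g t x - g t y‖ + ε ^ 3 * ‖R t x ε - R t y ε‖ := by
            simp only [norm_smul, norm_pow, Real.norm_of_nonneg hε.le]
        _ ≤ 1 * (M₁ * ‖x - y‖) + 1 * (Lg * ‖x - y‖) + 1 * (LR * ‖x - y‖) := by gcongr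
        _ = _ := by
            rw [NNReal.coe_add, NNReal.coe_add, Real.coe_toNNReal _ hM₁0]; ring
    have hVbd : ∀ t ∈ Set.Icc 0 T, ∀ x ∈ B, ‖V t x‖ ≤ 3 * M * ε := by
      intro t ht x hx
      calc _ ≤ ‖ε • f t x‖ + ‖ε ^ 2 • g t x‖ + ‖ε ^ 3 • R t x ε‖ := norm_add₃_le
        _ = ε * ‖f t x‖ + ε ^ 2 * ‖g t x‖ + ε ^ 3 * ‖R t x ε‖ := by
            simp only [norm_smul, norm_pow, Real.norm_of_nonneg hε.le]
        _ ≤ ε * M + ε * M + ε * M := by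
            gcongr
            · exact hfM t ht x hx
            · exact hgM t ht x hx
            · exact hRM ε hεI t x hx
        _ = _ := by ring
    obtain ⟨α, L', hα, hαT⟩ := exists_flow hρ hT (by positivity) hερ hVlip
      (fun x hx => by
        have h1 := hft x (hρΩ hx)
        have h2 := hgt x (hρΩ hx)
        have h3 := hRt ε hεI x (hρΩ hx)
        exact (((h1.const_smul ε).add (h2.const_smul (ε ^ 2))).add
          (h3.const_smul (ε ^ 3))).continuousOn) hVbd
    have hdisp : ∀ z ∈ Metric.closedBall p ρ,
        ‖α z T - z - ε ^ 2 • T • F z‖ ≤ c₀ * T * ε ^ 3 := by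
      intro z hz
      obtain ⟨hα0, hαz⟩ := hα z hz
      have hzB := hsubB hz
      have hzΩ := hρΩ hzB
      rw [← hTF z hzΩ]
      exact displacement_estimate hT hM0 hM₁0 hL0 hε hε1 (w := fun t => R t (α z t) ε)
        (hft z hzΩ) (hgt z hzΩ) (hdft z hzΩ)
        (fun t ht => hfM t ht _ (hαz t ht).1) (fun t ht => hgM t ht _ (hαz t ht).1)
        (fun t ht => hRM ε hεI t _ (hαz t ht).1) (fun t ht => hM₁ t ht z hzB)
        (fun t ht => hf1 t ht z hzB _ (hαz t ht).1)
        (fun t ht => (norm_sub_sub_fderiv_le hBconv (fun x hx => hfd t x (hρΩ hx))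
          ((hLf t).mono hρΩ) hzB (hαz t ht).1).trans
            (mul_le_mul_of_nonneg_right (le_add_of_nonneg_right Lg.2) (sq_nonneg _)))
        (fun t ht => ((hLg t).norm_sub_le (hρΩ (hαz t ht).1) hzΩ).trans
            (mul_le_mul_of_nonneg_right (le_add_of_nonneg_left Lf.2) (norm_nonneg _)))
        hα0 (fun t ht => (hαz t ht).2) (hmean z hzΩ)
    have hq : 0 < ε ^ 2 * T := by positivity
    -- the rescaled displacement is `O(ε)`-close to `F`, and its zeros are periodic initial points
    obtain ⟨z, hz, hzp, hQz⟩ := hzero ε hε hεε₂ (fun z => (ε ^ 2 * T)⁻¹ • (α z T - z))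
      (‖(ε ^ 2 * T)⁻¹‖₊ * (L' + 1))
      ((lipschitzWith_smul (ε ^ 2 * T)⁻¹).comp_lipschitzOnWith
        (hαT.sub LipschitzWith.id.lipschitzOnWith))
      (fun z hz => by
        have hid : (ε ^ 2 * T)⁻¹ • (α z T - z) - F z
            = (ε ^ 2 * T)⁻¹ • (α z T - z - ε ^ 2 • T • F z) := by
          rw [smul_sub (ε ^ 2 * T)⁻¹ (α z T - z), smul_smul (ε ^ 2), inv_smul_smul₀ hq.ne']
        rw [hid, norm_smul, Real.norm_of_nonneg (inv_nonneg.2 hq.le), inv_mul_le_iff₀ hq]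
        refine (hdisp z hz).trans (le_of_eq ?_)
        ring)
    have hfix : α z T = z :=
      sub_eq_zero.1 ((smul_eq_zero.1 hQz).resolve_left (inv_ne_zero hq.ne'))
    obtain ⟨hα0, hαz⟩ := hα z hz
    obtain ⟨φ, hφ0, hφmem, hφd, hφper⟩ := exists_periodic_extension hT (V := V)
      (fun t y => by simp only [hV, hfper, hgper, hRper]) (fun t ht => (hαz t ht).2)
      (hfix.trans hα0.symm)
    refine ⟨φ, fun _ _ => ⟨⟨fun t => ?_, hφd, hφper⟩, by rwa [hφ0, hα0]⟩⟩
    obtain ⟨s, hs, hts⟩ := hφmem t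
    rw [hts]
    exact hρΩ (hαz s hs).1
  choose φ hφ using hsol
  refine ⟨ε₁, hε₁0, (min_le_left _ _).trans (min_le_right _ _), φ,
    fun ε h1 h2 => (hφ ε h1 h2).1, ?_⟩
  rw [tendsto_iff_norm_sub_tendsto_zero]
  have hlim : Filter.Tendsto (fun ε : ℝ => D * ε) (nhdsWithin 0 (Set.Ioi 0)) (nhds 0) := by
    have : Continuous fun ε : ℝ => D * ε := by fun_prop
    simpa using this.continuousAt.tendsto.mono_left
      (nhdsWithin_le_nhds (a := (0 : ℝ)) (s := Set.Ioi 0))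
  refine squeeze_zero' (Filter.Eventually.of_forall fun ε => norm_nonneg _) ?_ hlim
  filter_upwards [Ioo_mem_nhdsGT hε₁0] with ε hε
  exact (hφ ε hε.1 hε.2).2
end
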